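/- Let g be a seven-dimensional real Lie algebra with a six-dimensional abelian ideal u, let e₇ ∈ g∖u, let V₂ and V₄ be subspaces of u of dimensions 2 and 4 with u = V₂ ⊕ V₄, and let ω ∈ Λ²V₄* be a nondegenerate two-form on V₄. Then g admits a cocalibrated G₂*-structure — i.e. there exists a closed four-form Ψ ∈ Λ⁴g* such that for some basis f¹,…,f⁷ of g*, Ψ = f^{1234}−f^{1256}−f^{3456}−f^{2467}+f^{2357}+f^{1457}+f^{1367} — if and only if ad(e₇)|_u ∈ End(u) is similar under GL(u) to an element of the set S := {f ∈ End(u) : f(V₄) ⊆ V₄ and pr_{V₄}∘f|_{V₄} = −(tr(f₂)/2)·id_{V₄} + f₄ for some f₄ ∈ sp(V₄,ω), where f₂ := pr_{V₂}∘f|_{V₂}}. -/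

import Mathlib

open Module

section AltMachinery

variable {F : Type*} [Field F] {V : Type*} [AddCommGroup V] [Module F V]

/-- The wedge `φ₁ ∧ … ∧ φ_m` of `m` covectors, as an alternating `m`-form on `V`:
`(φ₁ ∧ … ∧ φ_m)(v₁,…,v_m) = det (φ_i (v_j))`. -/
noncomputable def wedgeCov (m : ℕ) (φ : Fin m → Module.Dual F V) :
    V [⋀^Fin m]→ₗ[F] F :=
  (Matrix.detRowAlternating : (Fin m → F) [⋀^Fin m]→ₗ[F] F).compLinearMap
    (LinearMap.pi φ)

/-- A decomposable alternating `m`-form: a wedge of `m` covectors. -/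
def AltDec (m : ℕ) (X : V [⋀^Fin m]→ₗ[F] F) : Prop :=
  ∃ φ : Fin m → Module.Dual F V, X = wedgeCov m φ

/-- The `m`-form `X` is a sum of `l` decomposable `m`-forms. -/
def AltLenLE (m l : ℕ) (X : V [⋀^Fin m]→ₗ[F] F) : Prop :=
  ∃ Y : Fin l → (V [⋀^Fin m]→ₗ[F] F), (∀ i, AltDec m (Y i)) ∧ X = ∑ i, Y i

/-- The `m`-form `X` has length `l`: it is a sum of `l` decomposable `m`-forms and of no
smaller number of them. -/
def AltHasLen (m l : ℕ) (X : V [⋀^Fin m]→ₗ[F] F) : Prop :=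
  AltLenLE m l X ∧ ∀ j < l, ¬ AltLenLE m j X

end AltMachinery

section CE

variable {F : Type*} [Field F] {g : Type*} [LieRing g] [LieAlgebra F g]

/-- The Chevalley–Eilenberg differential of a `(k+1)`-form (given as a function on tuples):
`(dρ)(x₀,…,x_{k+1}) = ∑_{i<j} (-1)^{i+j} ρ(⁅x_i,x_j⁆, x₀,…,x̂_i,…,x̂_j,…,x_{k+1})`. -/
noncomputable def ceDiff (k : ℕ) (ρ : (Fin (k + 1) → g) → F) : (Fin (k + 2) → g) → F :=
  fun x => ∑ i : Fin (k + 2), ∑ j : Fin (k + 2),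
    if h : (i : ℕ) < (j : ℕ) then
      (-1 : F) ^ ((i : ℕ) + (j : ℕ)) *
        ρ (Fin.cons ⁅x i, x j⁆ fun l : Fin k =>
            x (j.succAbove ((⟨(i : ℕ),
              Nat.lt_of_lt_of_le h (Nat.lt_succ_iff.mp j.isLt)⟩ : Fin (k + 1)).succAbove l)))
    else 0

end CE

section G2Forms

variable {F : Type*} [Field F] {g : Type*} [AddCommGroup g] [Module F g]

/-- The wedge `f^i ∧ f^j ∧ f^k ∧ f^l` of four covectors from the basis `b` of `g*`. -/
noncomputable def bw (b : Basis (Fin 7) F (Module.Dual F g)) (i j k l : Fin 7) :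
    g [⋀^Fin 4]→ₗ[F] F :=
  wedgeCov 4 ![b i, b j, b k, b l]

/-- The four-form `f^{1234}+f^{1256}+f^{3456}-f^{2467}+f^{2357}+f^{1457}+f^{1367}` (the
Hodge dual of a `G₂`- resp. `(G₂)_ℂ`-structure), written with `0`-based indices. -/
noncomputable def stdG2 (b : Basis (Fin 7) F (Module.Dual F g)) : g [⋀^Fin 4]→ₗ[F] F :=
  bw b 0 1 2 3 + bw b 0 1 4 5 + bw b 2 3 4 5 - bw b 1 3 5 6 +
    bw b 1 2 4 6 + bw b 0 3 4 6 + bw b 0 2 5 6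

/-- The four-form `f^{1234}-f^{1256}-f^{3456}-f^{2467}+f^{2357}+f^{1457}+f^{1367}` (the
Hodge dual of a `G₂*`-structure), written with `0`-based indices. -/
noncomputable def stdG2star (b : Basis (Fin 7) F (Module.Dual F g)) :
    g [⋀^Fin 4]→ₗ[F] F :=
  bw b 0 1 2 3 - bw b 0 1 4 5 - bw b 2 3 4 5 - bw b 1 3 5 6 +
    bw b 1 2 4 6 + bw b 0 3 4 6 + bw b 0 2 5 6

/-- Membership in `Λ⁴W ⊆ Λ⁴g*` for a subspace `W ⊆ g*`: the span of the wedges of four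
covectors from `W`. -/
def mem4Pow (W : Submodule F (Module.Dual F g)) (Ω : g [⋀^Fin 4]→ₗ[F] F) : Prop :=
  Ω ∈ Submodule.span F
    {Y : g [⋀^Fin 4]→ₗ[F] F |
      ∃ φ : Fin 4 → Module.Dual F g, (∀ i, φ i ∈ W) ∧ Y = wedgeCov 4 φ}

end G2Forms

theorem add_skew {X : Type*} [AddCommGroup X] [Module ℝ X] (τ : X →ₗ[ℝ] X →ₗ[ℝ] ℝ)
    (h : ∀ x, τ x x = 0) (x y : X) : τ x y = - τ y x := by
  have := h (x + y)
  simp [h] at this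
  linarith

/-- `W` is `A`-invariant and carries a symplectic form which `A` scales infinitesimally by `c`. -/
def SympOn {U : Type*} [AddCommGroup U] [Module ℝ U] (A : U →ₗ[ℝ] U) (c : ℝ)
    (W : Submodule ℝ U) : Prop :=
  (∀ x ∈ W, A x ∈ W) ∧ ∃ τ : W →ₗ[ℝ] W →ₗ[ℝ] ℝ, (∀ x, τ x x = 0) ∧
    (∀ x, (∀ y, τ x y = 0) → x = 0) ∧
    ∀ x y z w : W, (z : U) = A x → (w : U) = A y → τ z y + τ x w = c * τ x y

theorem sympOn_range {U X : Type*} [AddCommGroup U] [Module ℝ U] [AddCommGroup X] [Module ℝ X]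
    (A : U →ₗ[ℝ] U) (c : ℝ) (P : X →ₗ[ℝ] U) (A' : X →ₗ[ℝ] X) (β : X →ₗ[ℝ] X →ₗ[ℝ] ℝ)
    (hA : ∀ x, A (P x) = P (A' x)) (halt : ∀ x, β x x = 0)
    (hrad : ∀ x, P x = 0 ↔ ∀ y, β x y = 0)
    (hinv : ∀ x y, β (A' x) y + β x (A' y) = c * β x y) :
    SympOn A c (LinearMap.range P) := by
  obtain ⟨s, hs⟩ := P.rangeRestrict.exists_rightInverse_of_surjective
    (LinearMap.range_eq_top.2 P.surjective_rangeRestrict)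
  have hs' : ∀ v : LinearMap.range P, P (s v) = v := fun v => by
    have := congrArg (fun f => ((f v : LinearMap.range P) : U)) hs
    simpa using this
  have hl : ∀ x x' y, P x = P x' → β x y = β x' y := fun x x' y h => by
    have := (hrad (x - x')).1 (by simp [h]) y
    simpa [sub_eq_zero] using this
  have hr : ∀ x x' y, P x = P x' → β y x = β y x' := fun x x' y h => by
    rw [add_skew β halt y, hl x x' y h, ← add_skew β halt]
  refine ⟨?_, β.compl₁₂ s s, fun x => by simp [halt], ?_, ?_⟩
  · rintro _ ⟨x, rfl⟩
    exact ⟨A' x, (hA x).symm⟩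
  · intro x hx
    have : P (s x) = 0 := by
      rw [hrad]
      intro y
      have h := hx ⟨P y, y, rfl⟩
      rw [LinearMap.compl₁₂_apply] at h
      rw [← h]
      exact hr _ _ _ (hs' ⟨P y, y, rfl⟩).symm
    rw [hs'] at this
    exact Subtype.ext this
  · intro x y z w hz hw
    simp only [LinearMap.compl₁₂_apply]
    rw [hl (s z) (A' (s x)) _ (by rw [hs', hz, ← hA, hs']),
      hr (s w) (A' (s y)) _ (by rw [hs', hw, ← hA, hs']), hinv]

theorem even_of_symp {X : Type*} [AddCommGroup X] [Module ℝ X] [FiniteDimensional ℝ X]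
    (τ : X →ₗ[ℝ] X →ₗ[ℝ] ℝ) (h : ∀ x, τ x x = 0) (hn : ∀ x, (∀ y, τ x y = 0) → x = 0) :
    Even (finrank ℝ X) := by
  by_contra hodd
  rw [Nat.not_even_iff_odd] at hodd
  let b := finBasis ℝ X
  let M : Matrix (Fin (finrank ℝ X)) (Fin (finrank ℝ X)) ℝ := Matrix.of fun i j => τ (b i) (b j)
  have hM : M.transpose = -M := by
    ext i j
    simp only [M, Matrix.transpose_apply, Matrix.neg_apply, Matrix.of_apply]
    exact add_skew τ h _ _
  have hd : M.det = 0 := by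
    have := Matrix.det_transpose M
    rw [hM, Matrix.det_neg, Fintype.card_fin, hodd.neg_one_pow] at this
    linarith
  obtain ⟨v, hv, hv0⟩ := Matrix.exists_vecMul_eq_zero_iff.2 hd
  have hx := hn (∑ i, v i • b i) (by
    intro y
    rw [← b.sum_repr y]
    simp only [map_sum, map_smul, LinearMap.sum_apply, LinearMap.smul_apply, smul_eq_mul]
    apply Finset.sum_eq_zero
    intro j _
    have := congrFun hv0 j
    simp only [Matrix.vecMul, dotProduct, M, Matrix.of_apply, Pi.zero_apply] at this
    rw [this, mul_zero])
  exact hv (funext (Fintype.linearIndependent_iff.1 b.linearIndependent v hx))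

theorem trace_of_symp {X : Type*} [AddCommGroup X] [Module ℝ X] [FiniteDimensional ℝ X]
    (τ : X →ₗ[ℝ] X →ₗ[ℝ] ℝ) (hn : ∀ x, (∀ y, τ x y = 0) → x = 0)
    (N : X →ₗ[ℝ] X) (c : ℝ) (hN : ∀ x y, τ (N x) y + τ x (N y) = c * τ x y) :
    2 * LinearMap.trace ℝ X N = c * finrank ℝ X := by
  have hinj : Function.Injective τ := by
    rw [injective_iff_map_eq_zero]
    intro x hx
    exact hn x fun y => by rw [hx]; rfl
  let e : X ≃ₗ[ℝ] Dual ℝ X := LinearEquiv.ofInjectiveOfFinrankEq τ hinj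
    (Subspace.dual_finrank_eq).symm
  have he : ∀ x, e x = τ x := fun x => rfl
  have hc : e.conj N + Dual.transpose (R := ℝ) N = c • LinearMap.id := by
    refine LinearMap.ext fun φ => ?_
    obtain ⟨x, rfl⟩ := e.surjective φ
    refine LinearMap.ext fun y => ?_
    have h1 : e.conj N (e x) = τ (N x) := by
      rw [LinearEquiv.conj_apply_apply, e.symm_apply_apply, he]
    rw [LinearMap.add_apply, h1]
    exact hN x y
  have h := LinearMap.trace_conj' N e
  have h2 := congrArg (LinearMap.trace ℝ (Dual ℝ X)) hc
  rw [map_add, map_smul, LinearMap.trace_id, LinearMap.trace_transpose',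
    Subspace.dual_finrank_eq, smul_eq_mul] at h2
  linarith

theorem darboux4 {X : Type*} [AddCommGroup X] [Module ℝ X] [FiniteDimensional ℝ X]
    (h4 : finrank ℝ X = 4)
    (τ : X →ₗ[ℝ] X →ₗ[ℝ] ℝ) (h : ∀ x, τ x x = 0) (hn : ∀ x, (∀ y, τ x y = 0) → x = 0) :
    ∃ b : Basis (Fin 4) ℝ X, τ (b 0) (b 1) = 1 ∧ τ (b 2) (b 3) = 1 ∧ τ (b 0) (b 2) = 0 ∧
      τ (b 0) (b 3) = 0 ∧ τ (b 1) (b 2) = 0 ∧ τ (b 1) (b 3) = 0 := by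
  have hpair : ∀ x : X, x ≠ 0 → ∃ y, τ x y = 1 := by
    intro x hx
    by_contra hcon
    push Not at hcon
    refine hx (hn x fun y => ?_)
    by_contra hy
    exact hcon ((τ x y)⁻¹ • y) (by simp [hy])
  have sk := add_skew τ h
  have : Nontrivial X := Module.nontrivial_of_finrank_pos (R := ℝ) (by omega)
  obtain ⟨x, hx⟩ := exists_ne (0 : X)
  obtain ⟨y, hxy⟩ := hpair x hx
  have hz : ∃ z, z ∉ Submodule.span ℝ (Set.range ![x, y]) := by
    by_contra hcon
    push Not at hcon
    have h1 : Submodule.span ℝ (Set.range ![x, y]) = ⊤ := eq_top_iff.2 fun z _ => hcon z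
    have h2 := finrank_range_le_card (R := ℝ) (![x, y])
    rw [Set.finrank, h1, finrank_top, h4] at h2
    simp at h2
  obtain ⟨z, hz⟩ := hz
  have hyx : τ y x = -1 := by rw [sk, hxy]
  let p := z + τ z x • y - τ z y • x
  have hp0 : p ≠ 0 := by
    intro hp
    apply hz
    have : z = τ z y • x - τ z x • y := by
      simp only [p] at hp
      rw [← sub_eq_zero, ← hp]; abel
    rw [this]
    refine Submodule.sub_mem _ (Submodule.smul_mem _ _ (Submodule.subset_span ⟨0, rfl⟩))
      (Submodule.smul_mem _ _ (Submodule.subset_span ⟨1, rfl⟩))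
  have hpx : τ p x = 0 := by simp [p, h, hyx]
  have hpy : τ p y = 0 := by simp [p, h, hxy]
  obtain ⟨w, hw⟩ := hpair p hp0
  let q := w + τ w x • y - τ w y • x
  have hqx : τ q x = 0 := by simp [q, h, hyx]
  have hqy : τ q y = 0 := by simp [q, h, hxy]
  have hpq : τ p q = 1 := by simp [q, hpx, hpy, hw]
  have hqp : τ q p = -1 := by rw [sk, hpq]
  have hxp : τ x p = 0 := by rw [sk, hpx, neg_zero]
  have hyp : τ y p = 0 := by rw [sk, hpy, neg_zero]
  have hxq : τ x q = 0 := by rw [sk, hqx, neg_zero]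
  have hyq : τ y q = 0 := by rw [sk, hqy, neg_zero]
  have hli : LinearIndependent ℝ ![x, y, p, q] := by
    rw [Fintype.linearIndependent_iff]
    intro c hc
    simp only [Fin.sum_univ_four, Matrix.cons_val] at hc
    have e0 := congrArg (fun v => τ v y) hc
    have e1 := congrArg (fun v => τ v x) hc
    have e2 := congrArg (fun v => τ v q) hc
    have e3 := congrArg (fun v => τ v p) hc
    simp [h, hxy, hyx, hpx, hpy, hqx, hqy, hpq, hqp, hxp, hyp, hxq, hyq] at e0 e1 e2 e3
    intro i
    fin_cases i <;> simp [*]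
  refine ⟨basisOfLinearIndependentOfCardEqFinrank hli (by simp [h4]), ?_⟩
  simp [hxy, hpq, hxp, hxq, hyp, hyq]

theorem symp_isometry {X Y : Type*} [AddCommGroup X] [Module ℝ X] [FiniteDimensional ℝ X]
    [AddCommGroup Y] [Module ℝ Y] [FiniteDimensional ℝ Y]
    (hX : finrank ℝ X = 4) (hY : finrank ℝ Y = 4)
    (τ : X →ₗ[ℝ] X →ₗ[ℝ] ℝ) (h : ∀ x, τ x x = 0) (hn : ∀ x, (∀ y, τ x y = 0) → x = 0)
    (τ' : Y →ₗ[ℝ] Y →ₗ[ℝ] ℝ) (h' : ∀ x, τ' x x = 0) (hn' : ∀ x, (∀ y, τ' x y = 0) → x = 0) :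
    ∃ e : X ≃ₗ[ℝ] Y, ∀ x y, τ' (e x) (e y) = τ x y := by
  obtain ⟨b, b1, b2, b3, b4, b5, b6⟩ := darboux4 hX τ h hn
  obtain ⟨d, d1, d2, d3, d4, d5, d6⟩ := darboux4 hY τ' h' hn'
  refine ⟨b.equiv d (Equiv.refl _), ?_⟩
  have : τ'.compl₁₂ (b.equiv d (Equiv.refl _)).toLinearMap (b.equiv d (Equiv.refl _)).toLinearMap
      = τ := by
    have s := add_skew τ h
    have s' := add_skew τ' h'
    refine b.ext fun i => b.ext fun j => ?_
    simp only [LinearMap.compl₁₂_apply, LinearEquiv.coe_coe, Basis.equiv_apply, Equiv.refl_apply]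
    fin_cases i <;> fin_cases j <;> simp only [Fin.zero_eta, Fin.mk_one, Fin.reduceFinMk] <;>
      first
      | (simp only [h, h', b1, b2, b3, b4, b5, b6, d1, d2, d3, d4, d5, d6]; done)
      | (rw [s, s']; simp only [h, h', b1, b2, b3, b4, b5, b6, d1, d2, d3, d4, d5, d6]; done)
  intro x y
  rw [← this]
  rfl

theorem sympOn_sub {U : Type*} [AddCommGroup U] [Module ℝ U] (A : U →ₗ[ℝ] U) (c : ℝ)
    (W : Submodule ℝ U) (hW : ∀ x ∈ W, A x ∈ W) (σ : U →ₗ[ℝ] U →ₗ[ℝ] ℝ)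
    (halt : ∀ x ∈ W, σ x x = 0) (hnd : ∀ x ∈ W, (∀ y ∈ W, σ x y = 0) → x = 0)
    (hinv : ∀ x ∈ W, ∀ y ∈ W, σ (A x) y + σ x (A y) = c * σ x y) : SympOn A c W := by
  refine ⟨hW, σ.compl₁₂ W.subtype W.subtype, fun x => halt x x.2, fun x hx => ?_, ?_⟩
  · exact Subtype.ext (hnd x x.2 fun y hy => hx ⟨y, hy⟩)
  · intro x y z w hz hw
    simp only [LinearMap.compl₁₂_apply, Submodule.subtype_apply, hz, hw]
    exact hinv x x.2 y y.2

theorem trace_split {U : Type*} [AddCommGroup U] [Module ℝ U] [FiniteDimensional ℝ U]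
    (V₂ V₄ : Submodule ℝ U) (hc : IsCompl V₂ V₄) (f : U →ₗ[ℝ] U) :
    LinearMap.trace ℝ U f =
      LinearMap.trace ℝ V₂ ((V₂.linearProjOfIsCompl V₄ hc) ∘ₗ f ∘ₗ V₂.subtype) +
      LinearMap.trace ℝ V₄ ((V₄.linearProjOfIsCompl V₂ hc.symm) ∘ₗ f ∘ₗ V₄.subtype) := by
  have h : f = (f ∘ₗ V₂.subtype) ∘ₗ (V₂.linearProjOfIsCompl V₄ hc) +
      (f ∘ₗ V₄.subtype) ∘ₗ (V₄.linearProjOfIsCompl V₂ hc.symm) := by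
    ext x
    simp only [LinearMap.add_apply, LinearMap.comp_apply, Submodule.subtype_apply, ← map_add]
    exact congrArg f (Submodule.projection_add_projection_eq_self hc x).symm
  conv_lhs => rw [h]
  rw [map_add, LinearMap.trace_comp_comm', LinearMap.trace_comp_comm' (f ∘ₗ V₄.subtype)]

theorem good_to_rhs {U : Type*} [AddCommGroup U] [Module ℝ U] [FiniteDimensional ℝ U]
    (hU : finrank ℝ U = 6) (V₂ V₄ : Submodule ℝ U) (hc : IsCompl V₂ V₄)
    (h2 : finrank ℝ ↥V₂ = 2) (h4 : finrank ℝ ↥V₄ = 4)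
    (ω : ↥V₄ →ₗ[ℝ] ↥V₄ →ₗ[ℝ] ℝ) (halt : ∀ v : ↥V₄, ω v v = 0)
    (hnd : ∀ v : ↥V₄, (∀ w : ↥V₄, ω v w = 0) → v = 0)
    (A : U →ₗ[ℝ] U) (W : Submodule ℝ U) (hW : finrank ℝ W = 4)
    (hS : SympOn A (LinearMap.trace ℝ U A) W) :
      ∃ T : U ≃ₗ[ℝ] U, ∃ f : U →ₗ[ℝ] U,
        f = T.toLinearMap ∘ₗ A ∘ₗ T.symm.toLinearMap ∧
        (∀ x : U, x ∈ V₄ → f x ∈ V₄) ∧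
        ∃ f₄ : ↥V₄ →ₗ[ℝ] ↥V₄,
          (∀ x y : ↥V₄, ω (f₄ x) y + ω x (f₄ y) = 0) ∧
          ∀ x : ↥V₄,
            (V₄.linearProjOfIsCompl V₂ hc.symm) (f ↑x) =
              -((LinearMap.trace ℝ ↥V₂)
                  ((V₂.linearProjOfIsCompl V₄ hc) ∘ₗ f ∘ₗ V₂.subtype) / 2) • x +
                f₄ x := by
  obtain ⟨hinv, τ, τalt, τnd, τrel⟩ := hS
  obtain ⟨e, he⟩ := symp_isometry hW h4 τ τalt τnd ω halt hnd
  obtain ⟨W', hW'⟩ := W.exists_isCompl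
  have hfr := Submodule.finrank_add_eq_of_isCompl hW'
  let e' : W' ≃ₗ[ℝ] V₂ := LinearEquiv.ofFinrankEq _ _ (by omega)
  let T : U ≃ₗ[ℝ] U := (W.prodEquivOfIsCompl W' hW').symm ≪≫ₗ (e.prodCongr e') ≪≫ₗ
    (V₄.prodEquivOfIsCompl V₂ hc.symm)
  have hT : ∀ x : W, T x = e x := by
    intro x
    simp [T]
  let AW : W →ₗ[ℝ] W := A.restrict hinv
  let fV : V₄ →ₗ[ℝ] V₄ := e.conj AW
  let f : U →ₗ[ℝ] U := T.toLinearMap ∘ₗ A ∘ₗ T.symm.toLinearMap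
  have hf : ∀ x : V₄, f x = fV x := by
    intro x
    obtain ⟨w, rfl⟩ := e.surjective x
    simp only [f, fV, LinearMap.comp_apply, LinearEquiv.coe_coe, LinearEquiv.conj_apply_apply,
      LinearEquiv.symm_apply_apply]
    rw [← hT, LinearEquiv.symm_apply_apply, ← hT]
    rfl
  have hrel : ∀ x y : V₄, ω (fV x) y + ω x (fV y) = LinearMap.trace ℝ U A * ω x y := by
    intro x y
    obtain ⟨x, rfl⟩ := e.surjective x
    obtain ⟨y, rfl⟩ := e.surjective y
    simp only [fV, LinearEquiv.conj_apply_apply, LinearEquiv.symm_apply_apply, he]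
    exact τrel x y _ _ rfl rfl
  have htr := trace_of_symp ω hnd fV _ hrel
  have hproj : ∀ x : V₄, (V₄.linearProjOfIsCompl V₂ hc.symm) (f x) = fV x := by
    intro x
    rw [hf]
    exact Submodule.projectionOnto_apply_left hc.symm _
  have htf : LinearMap.trace ℝ U f = LinearMap.trace ℝ U A := LinearMap.trace_conj' A T
  have hsp := trace_split V₂ V₄ hc f
  have h3 : (V₄.linearProjOfIsCompl V₂ hc.symm) ∘ₗ f ∘ₗ V₄.subtype = fV := LinearMap.ext hproj
  rw [h3, htf] at hsp
  rw [h4] at htr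
  refine ⟨T, f, rfl, fun x hx => by rw [hf ⟨x, hx⟩]; exact (fV ⟨x, hx⟩).2,
    fV + (((LinearMap.trace ℝ ↥V₂)
      ((V₂.linearProjOfIsCompl V₄ hc) ∘ₗ f ∘ₗ V₂.subtype) / 2)) • LinearMap.id, ?_, ?_⟩
  · intro x y
    simp only [LinearMap.add_apply, LinearMap.smul_apply, LinearMap.id_apply, map_add, map_smul,
      smul_eq_mul]
    have := hrel x y
    push_cast at htr
    linear_combination this + (ω x y) * (-htr/2 - hsp)
  · intro x
    rw [hproj]
    simp

theorem real_eig3 {L : Type*} [AddCommGroup L] [Module ℝ L] [FiniteDimensional ℝ L]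
    (h3 : finrank ℝ L = 3) (B : L →ₗ[ℝ] L) : ∃ μ : ℝ, ∃ x : L, x ≠ 0 ∧ B x = μ • x := by
  have hd : B.charpoly.natDegree = 3 := by rw [LinearMap.charpoly_natDegree, h3]
  have hroot : ∃ μ, B.charpoly.IsRoot μ := by
    by_contra hcon
    push Not at hcon
    have hirr : Irreducible B.charpoly := by
      rw [Polynomial.irreducible_iff_roots_eq_zero_of_degree_le_three (by omega) (by omega)]
      refine Multiset.eq_zero_of_forall_notMem fun μ hμ => hcon μ ?_
      exact Polynomial.isRoot_of_mem_roots hμ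
    have h2 := hirr.natDegree_le_two
    omega
  obtain ⟨μ, hμ⟩ := hroot
  have hev := (Module.End.hasEigenvalue_iff_isRoot_charpoly B μ).2 hμ
  obtain ⟨x, hx⟩ := hev.exists_hasEigenvector
  exact ⟨μ, x, hx.2, hx.apply_eq_smul⟩

theorem self_adj_eig {U : Type*} [AddCommGroup U] [Module ℝ U] [FiniteDimensional ℝ U]
    (hU : finrank ℝ U = 6) (σ : U →ₗ[ℝ] U →ₗ[ℝ] ℝ) (halt : ∀ x, σ x x = 0)
    (hnd : ∀ x, (∀ y, σ x y = 0) → x = 0) (B : U →ₗ[ℝ] U)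
    (hB : ∀ x y, σ (B x) y = σ x (B y)) : ∃ μ : ℝ, ∃ x : U, x ≠ 0 ∧ B x = μ • x := by
  have sk := add_skew σ halt
  have hND : LinearMap.BilinForm.Nondegenerate σ :=
    ⟨fun x hx => hnd x hx, fun x hx => hnd x fun y => by rw [sk, hx, neg_zero]⟩
  let S : Set (Submodule ℝ U) :=
    {L | (∀ x ∈ L, B x ∈ L) ∧ ∀ x ∈ L, ∀ y ∈ L, σ x y = 0}
  have hne : S.Nonempty := ⟨⊥, by simp [S]⟩
  obtain ⟨L, hLS, hmax⟩ := WellFounded.has_min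
    (wellFounded_gt : WellFounded ((· > ·) : Submodule ℝ U → Submodule ℝ U → Prop)) S hne
  obtain ⟨hLB, hLi⟩ := hLS
  have hperp : LinearMap.BilinForm.orthogonal σ L = L := by
    apply le_antisymm
    · intro y hy
      have hy' : ∀ l ∈ L, σ l y = 0 := hy
      have hpow : ∀ (n : ℕ) (x z : U), σ ((B ^ n) x) z = σ x ((B ^ n) z) := by
        intro n
        induction n with
        | zero => intro x z; simp
        | succ n ih =>
          intro x z
          rw [pow_succ, Module.End.mul_apply, ih, hB, ← Module.End.mul_apply, ← pow_succ', pow_succ,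
            Module.End.mul_apply]
      have hLp : ∀ (n : ℕ) (l : U), l ∈ L → (B ^ n) l ∈ L := by
        intro n
        induction n with
        | zero => intro l hl; simpa using hl
        | succ n ih => 
          intro l hl
          rw [pow_succ, Module.End.mul_apply]
          exact ih _ (hLB l hl)
      have hyy : ∀ n : ℕ, σ y ((B ^ n) y) = 0 := by
        intro n
        have h1 := hpow n y y
        rw [sk] at h1
        linarith
      let C := Submodule.span ℝ (Set.range fun n : ℕ => (B ^ n) y)
      have hyC : y ∈ C := Submodule.subset_span ⟨0, by simp⟩
      have hCB : ∀ c ∈ C, B c ∈ C := by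
        intro c hc
        have : C ≤ C.comap B := by
          refine Submodule.span_le.2 ?_
          rintro _ ⟨n, rfl⟩
          refine Submodule.subset_span ⟨n + 1, ?_⟩
          simp only [pow_succ', Module.End.mul_apply]
        exact this hc
      have hlC : ∀ l ∈ L, ∀ c ∈ C, σ l c = 0 := by
        intro l hl c hc
        have : C ≤ LinearMap.ker (σ l) := by
          refine Submodule.span_le.2 ?_
          rintro _ ⟨n, rfl⟩
          simp only [SetLike.mem_coe, LinearMap.mem_ker]
          rw [← hpow]
          exact hy' _ (hLp n l hl)
        exact this hc
      have hyC' : ∀ n : ℕ, ∀ c ∈ C, σ ((B ^ n) y) c = 0 := by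
        intro n c hc
        have : C ≤ LinearMap.ker (σ ((B ^ n) y)) := by
          refine Submodule.span_le.2 ?_
          rintro _ ⟨m, rfl⟩
          simp only [SetLike.mem_coe, LinearMap.mem_ker]
          rw [hpow, ← Module.End.mul_apply, ← pow_add]
          exact hyy _
        exact this hc
      have hCC : ∀ d ∈ C, ∀ c ∈ C, σ d c = 0 := by
        intro d hd c hc
        have : C ≤ LinearMap.ker (σ c) := by
          refine Submodule.span_le.2 ?_
          rintro _ ⟨m, rfl⟩
          simp only [SetLike.mem_coe, LinearMap.mem_ker]
          rw [sk, hyC' m c hc, neg_zero]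
        rw [sk, this hd, neg_zero]
      have hmem : L ⊔ C ∈ S := by
        constructor
        · intro x hx
          obtain ⟨l, hl, c, hc, rfl⟩ := Submodule.mem_sup.1 hx
          rw [map_add]
          exact Submodule.add_mem_sup (hLB l hl) (hCB c hc)
        · intro x hx z hz
          obtain ⟨l, hl, c, hc, rfl⟩ := Submodule.mem_sup.1 hx
          obtain ⟨l', hl', c', hc', rfl⟩ := Submodule.mem_sup.1 hz
          simp only [map_add, LinearMap.add_apply]
          rw [hLi l hl l' hl', hlC l hl c' hc', hCC c hc c' hc', sk c l', hlC l' hl' c hc]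
          simp
      have hnot := hmax _ hmem
      have hle : L ≤ L ⊔ C := le_sup_left
      by_contra hyL
      apply hnot
      refine lt_of_le_of_ne hle fun heq => hyL ?_
      rw [heq]
      exact (le_sup_right : C ≤ L ⊔ C) hyC
    · intro y hy l hl
      exact hLi l hl y hy
  have hfr := LinearMap.BilinForm.finrank_orthogonal hND L
  rw [hperp, hU] at hfr
  obtain ⟨μ, x, hx, hBx⟩ := real_eig3 (by omega) (B.restrict hLB)
  exact ⟨μ, x, by simpa using hx, by simpa using congrArg Subtype.val hBx⟩

theorem perp2 {U : Type*} [AddCommGroup U] [Module ℝ U] [FiniteDimensional ℝ U]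
    (hU : finrank ℝ U = 6) (σ : U →ₗ[ℝ] U →ₗ[ℝ] ℝ) (halt : ∀ x, σ x x = 0)
    (hnd : ∀ x, (∀ y, σ x y = 0) → x = 0) (A : U →ₗ[ℝ] U)
    (hA : ∀ x y, σ (A x) y + σ x (A y) = 0) (x y : U) (hxy : σ x y ≠ 0) (a b c d : ℝ)
    (hx : A x = a • x + b • y) (hy : A y = c • x + d • y) :
    ∃ W : Submodule ℝ U, finrank ℝ W = 4 ∧ SympOn A 0 W := by
  have sk := add_skew σ halt
  let Lm : U →ₗ[ℝ] ℝ × ℝ := (σ x).prod (σ y)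
  have hmem : ∀ z, z ∈ LinearMap.ker Lm ↔ σ x z = 0 ∧ σ y z = 0 := by
    intro z
    simp [Lm]
  have hsurj : Function.Surjective Lm := by
    rintro ⟨s, t⟩
    refine ⟨(s / σ x y) • y - (t / σ x y) • x, ?_⟩
    have hyx : σ y x = - σ x y := sk _ _
    simp [Lm, halt, hyx]
    constructor <;> field_simp
  refine ⟨LinearMap.ker Lm, ?_, ?_⟩
  · have h1 := LinearMap.finrank_range_add_finrank_ker Lm
    rw [LinearMap.range_eq_top.2 hsurj, finrank_top, hU] at h1
    simp at h1
    omega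
  · apply sympOn_sub A 0 _ _ σ (fun z _ => halt z)
    · intro z hz hz'
      obtain ⟨h1, h2⟩ := (hmem z).1 hz
      have hzx : σ z x = 0 := by rw [sk, h1, neg_zero]
      have hzy : σ z y = 0 := by rw [sk, h2, neg_zero]
      refine hnd z fun w => ?_
      have hyx : σ y x = - σ x y := sk _ _
      have hw := hz' (w - (σ x w / σ x y) • y + (σ y w / σ x y) • x) (by
        rw [hmem]
        simp only [map_add, map_sub, map_smul, smul_eq_mul, halt, hyx]
        constructor <;> field_simp <;> ring)
      simpa [hzx, hzy] using hw
    · intro z _ w _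
      rw [hA, zero_mul]
    · intro z hz
      obtain ⟨h1, h2⟩ := (hmem z).1 hz
      rw [hmem]
      have e1 := hA x z
      have e2 := hA y z
      rw [hx] at e1
      rw [hy] at e2
      simp only [map_add, map_smul, LinearMap.add_apply, LinearMap.smul_apply, h1, h2, smul_zero,
        zero_add] at e1 e2
      exact ⟨e1, e2⟩

theorem nilp_case {U : Type*} [AddCommGroup U] [Module ℝ U] [FiniteDimensional ℝ U]
    (A : U →ₗ[ℝ] U) (K : Submodule ℝ U) (hK : ∀ x, x ∈ K ↔ A (A x) = 0)
    (hZ : finrank ℝ (LinearMap.ker A) = 2)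
    (hsurj : ∀ z, A z = 0 → ∃ x ∈ K, A x = z) : SympOn A 0 K := by
  obtain ⟨π, hπ⟩ := (LinearMap.ker A).subtype.exists_leftInverse_of_injective
    (Submodule.ker_subtype _)
  have hπ' : ∀ z (hz : z ∈ LinearMap.ker A), π z = ⟨z, hz⟩ := fun z hz =>
    LinearMap.congr_fun hπ ⟨z, hz⟩
  let bZ := finBasisOfFinrankEq ℝ (LinearMap.ker A) hZ
  let t : Fin 2 → (U →ₗ[ℝ] ℝ) := fun i => (bZ.coord i) ∘ₗ π
  have ht0 : ∀ z, A z = 0 → t 0 z = 0 → t 1 z = 0 → z = 0 := by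
    intro z hz h0 h1
    have : (⟨z, hz⟩ : LinearMap.ker A) = 0 := by
      rw [← bZ.forall_coord_eq_zero_iff]
      intro i
      have := hπ' z hz
      fin_cases i
      · simpa [t, this] using h0
      · simpa [t, this] using h1
    exact congrArg Subtype.val this
  have htb : ∀ i j, t i (bZ j : U) = if i = j then 1 else 0 := by
    intro i j
    have := hπ' (bZ j) (bZ j).2
    simp only [t, LinearMap.comp_apply, this, Subtype.coe_eta, Basis.coord_apply,
      Basis.repr_self, Finsupp.single_apply, eq_comm]
  let β : U →ₗ[ℝ] U →ₗ[ℝ] ℝ := LinearMap.mk₂ ℝ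
    (fun x y => t 0 x * t 0 (A y) + t 1 x * t 1 (A y) - t 0 (A x) * t 0 y - t 1 (A x) * t 1 y)
    (by intros; simp only [map_add]; ring)
    (by intros; simp only [map_smul, smul_eq_mul]; ring)
    (by intros; simp only [map_add]; ring)
    (by intros; simp only [map_smul, smul_eq_mul]; ring)
  have hβ : ∀ x y, β x y =
    t 0 x * t 0 (A y) + t 1 x * t 1 (A y) - t 0 (A x) * t 0 y - t 1 (A x) * t 1 y :=
    fun x y => rfl
  refine sympOn_sub A 0 K ?_ β ?_ ?_ ?_
  · intro x hx
    rw [hK] at hx ⊢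
    rw [hx, map_zero]
  · intro x _
    rw [hβ]
    ring
  · intro x hx h
    rw [hK] at hx
    have hker : ∀ j, A (bZ j : U) = 0 := fun j => (bZ j).2
    have hbK : ∀ j, (bZ j : U) ∈ K := fun j => by rw [hK, hker, map_zero]
    have q0 := h _ (hbK 0)
    have q1 := h _ (hbK 1)
    simp only [hβ, hker, map_zero, htb] at q0 q1
    simp at q0 q1
    have hAx : A x = 0 := ht0 _ hx q0 q1
    obtain ⟨y0, hy0, hAy0⟩ := hsurj _ (hker 0)
    obtain ⟨y1, hy1, hAy1⟩ := hsurj _ (hker 1)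
    have r0 := h _ hy0
    have r1 := h _ hy1
    simp only [hβ, hAx, hAy0, hAy1, map_zero, htb] at r0 r1
    simp at r0 r1
    exact ht0 _ hAx r0 r1
  · intro x hx y hy
    rw [hK] at hx hy
    simp only [hβ, hx, hy, map_zero]
    ring

theorem sp6_case {U : Type*} [AddCommGroup U] [Module ℝ U] [FiniteDimensional ℝ U]
    (hU : finrank ℝ U = 6) (σ : U →ₗ[ℝ] U →ₗ[ℝ] ℝ) (halt : ∀ x, σ x x = 0)
    (hnd : ∀ x, (∀ y, σ x y = 0) → x = 0) (A : U →ₗ[ℝ] U)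
    (hA : ∀ x y, σ (A x) y + σ x (A y) = 0) :
    ∃ W : Submodule ℝ U, finrank ℝ W = 4 ∧ SympOn A 0 W := by
  have sk := add_skew σ halt
  have hND : LinearMap.BilinForm.Nondegenerate σ :=
    ⟨fun x hx => hnd x hx, fun x hx => hnd x fun y => by rw [sk, hx, neg_zero]⟩
  obtain ⟨μ, x₀, hx₀, hμ⟩ := self_adj_eig hU σ halt hnd (A ∘ₗ A) (by
    intro x y
    simp only [LinearMap.comp_apply]
    linarith [hA (A x) y, hA x (A y)])
  by_contra hcon
  let P : U →ₗ[ℝ] U := A ∘ₗ A - μ • LinearMap.id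
  have hP : ∀ x, P x = A (A x) - μ • x := fun x => rfl
  have hS : SympOn A 0 (LinearMap.range P) := by
    refine sympOn_range A 0 P A (σ ∘ₗ P) ?_ ?_ ?_ ?_
    · intro x
      simp [hP]
    · intro x
      simp only [LinearMap.comp_apply, hP, map_sub, map_smul, LinearMap.sub_apply,
        LinearMap.smul_apply, halt]
      have h1 := hA (A x) x
      rw [halt] at h1
      simp only [smul_zero, sub_zero]
      linarith
    · intro x
      constructor
      · intro h y
        simp [h]
      · intro h
        exact hnd _ h
    · intro x y
      simp only [LinearMap.comp_apply]
      have : P (A x) = A (P x) := by simp [hP]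
      rw [this, hA, zero_mul]
  have hev : Even (finrank ℝ (LinearMap.range P)) := by
    obtain ⟨-, τ, h1, h2, -⟩ := hS
    exact even_of_symp τ h1 h2
  have hrn := LinearMap.finrank_range_add_finrank_ker P
  rw [hU] at hrn
  have hkpos : 0 < finrank ℝ (LinearMap.ker P) := by
    rw [Module.finrank_pos_iff_exists_ne_zero]
    refine ⟨⟨x₀, ?_⟩, fun h => hx₀ (congrArg Subtype.val h)⟩
    simp only [LinearMap.mem_ker, hP]
    rw [← hμ]
    simp
  have hr4 : finrank ℝ (LinearMap.range P) ≠ 4 := fun h => hcon ⟨_, h, hS⟩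
  have hkP : ∀ x, x ∈ LinearMap.ker P ↔ A (A x) = μ • x := by
    intro x
    rw [LinearMap.mem_ker, hP, sub_eq_zero]
  -- no nondegenerate invariant planes
  have hK1 : ∀ x ∈ LinearMap.ker P, σ x (A x) = 0 := by
    intro x hx
    by_contra h
    exact hcon (perp2 hU σ halt hnd A hA x (A x) h 0 1 μ 0 (by simp) (by simp [(hkP x).1 hx]))
  have hK2 : ∀ x ∈ LinearMap.ker P, ∀ y ∈ LinearMap.ker P, σ x (A y) = 0 := by
    intro x hx y hy
    have h1 := hK1 (x + y) (Submodule.add_mem _ hx hy)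
    simp only [map_add, LinearMap.add_apply, hK1 x hx, hK1 y hy] at h1
    have h2 := hA x y
    have h3 := sk (A x) y
    linarith
  have hk0 : ∀ x, A x = 0 → ∀ y, A y = 0 → σ x y = 0 := by
    intro x hx y hy
    by_contra h
    exact hcon (perp2 hU σ halt hnd A hA x y h 0 0 0 0 (by simp [hx]) (by simp [hy]))
  have hkA : LinearMap.ker A ≤ LinearMap.BilinForm.orthogonal σ (LinearMap.ker A) :=
    fun y hy x hx => hk0 x hx y hy
  have hfo := LinearMap.BilinForm.finrank_orthogonal hND (LinearMap.ker A)
  have hle := Submodule.finrank_mono hkA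
  have hrA := LinearMap.finrank_range_add_finrank_ker A
  rw [hU] at hrA hfo
  have hkA3 : finrank ℝ (LinearMap.ker A) ≤ 3 := by omega
  let K := LinearMap.ker P
  have hKo : Submodule.map A K ≤ LinearMap.BilinForm.orthogonal σ K := by
    rintro _ ⟨y, hy, rfl⟩ x hx
    exact hK2 x hx y hy
  have hKfo := LinearMap.BilinForm.finrank_orthogonal hND K
  have hKle := Submodule.finrank_mono hKo
  have hKrn := LinearMap.finrank_range_add_finrank_ker (A.domRestrict K)
  rw [LinearMap.range_domRestrict] at hKrn
  -- the kernel of the restriction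
  have hkr : (LinearMap.ker (A.domRestrict K)).map K.subtype = LinearMap.ker A ⊓ K := by
    rw [LinearMap.ker_domRestrict, Submodule.map_comap_subtype, inf_comm]
  have hkr' : finrank ℝ (LinearMap.ker (A.domRestrict K)) = finrank ℝ ↥(LinearMap.ker A ⊓ K) := by
    rw [← hkr]
    exact (LinearEquiv.finrank_eq (Submodule.equivMapOfInjective _ K.injective_subtype _))
  have hKK : finrank ℝ K = finrank ℝ (LinearMap.ker P) := rfl
  have hinf : finrank ℝ ↥(LinearMap.ker A ⊓ K) ≤ finrank ℝ (LinearMap.ker A) :=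
    Submodule.finrank_mono inf_le_left
  rw [hU] at hKfo
  have hr2 : finrank ℝ (LinearMap.range P) = 2 := by
    obtain ⟨k, hk⟩ := hev
    omega
  have hμ0 : μ = 0 := by
    by_contra hne
    have : LinearMap.ker A ⊓ K = ⊥ := by
      rw [eq_bot_iff]
      rintro x ⟨h1, h2⟩
      have h3 := (hkP x).1 h2
      rw [LinearMap.mem_ker.1 h1, map_zero] at h3
      have := smul_eq_zero.1 h3.symm
      exact this.resolve_left hne
    rw [this, finrank_bot] at hkr'
    omega
  have hkP0 : ∀ x, x ∈ K ↔ A (A x) = 0 := by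
    intro x
    rw [hkP, hμ0, zero_smul]
  have hAK : LinearMap.ker A ⊓ K = LinearMap.ker A := by
    rw [inf_eq_left]
    intro x hx
    rw [hkP0, LinearMap.mem_ker.1 hx, map_zero]
  rw [hAK] at hkr'
  have hro : LinearMap.range A ≤ LinearMap.BilinForm.orthogonal σ (LinearMap.ker A) := by
    rintro _ ⟨y, rfl⟩ x hx
    have := hA x y
    rw [LinearMap.mem_ker.1 hx] at this
    simpa using this
  have hkA2 : finrank ℝ (LinearMap.ker A) = 2 := by
    have hne3 : finrank ℝ (LinearMap.ker A) ≠ 3 := by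
      intro h3
      have e1 := Submodule.eq_of_le_of_finrank_eq hkA (by omega)
      rw [← e1] at hro
      have : LinearMap.ker P = ⊤ := by
        rw [eq_top_iff]
        intro x _
        rw [hkP0]
        exact hro ⟨x, rfl⟩
      rw [this, finrank_top] at hrn
      omega
    omega
  refine hcon ⟨K, by omega, nilp_case A K hkP0 hkA2 ?_⟩
  have hmap : Submodule.map A K ≤ LinearMap.ker A := by
    rintro _ ⟨y, hy, rfl⟩
    exact (hkP0 y).1 hy
  have heq := Submodule.eq_of_le_of_finrank_eq hmap (by omega)
  intro z hz
  have : z ∈ Submodule.map A K := by rw [heq]; exact hz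
  exact this

theorem ce_expand {g : Type*} [LieRing g] [LieAlgebra ℝ g] (ρ : (Fin 4 → g) → ℝ) (x : Fin 5 → g) :
    ceDiff 3 ρ x = - ρ ![⁅x 0, x 1⁆, x 2, x 3, x 4] + ρ ![⁅x 0, x 2⁆, x 1, x 3, x 4]
      - ρ ![⁅x 0, x 3⁆, x 1, x 2, x 4] + ρ ![⁅x 0, x 4⁆, x 1, x 2, x 3]
      - ρ ![⁅x 1, x 2⁆, x 0, x 3, x 4] + ρ ![⁅x 1, x 3⁆, x 0, x 2, x 4]
      - ρ ![⁅x 1, x 4⁆, x 0, x 2, x 3] - ρ ![⁅x 2, x 3⁆, x 0, x 1, x 4]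
      + ρ ![⁅x 2, x 4⁆, x 0, x 1, x 3] - ρ ![⁅x 3, x 4⁆, x 0, x 1, x 2] := by
  have key : ∀ (y : g) (s : Fin 3 → g), (Fin.cons y s : Fin 4 → g) = ![y, s 0, s 1, s 2] := by
    intro y s; funext i; fin_cases i <;> rfl
  have h0 : ceDiff 3 ρ x = ∑ i : Fin 5, ∑ j : Fin 5,
    if h : (i : ℕ) < (j : ℕ) then
      (-1 : ℝ) ^ ((i : ℕ) + (j : ℕ)) *
        ρ (Fin.cons ⁅x i, x j⁆ fun l : Fin 3 =>
            x (j.succAbove ((⟨(i : ℕ),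
              Nat.lt_of_lt_of_le h (Nat.lt_succ_iff.mp j.isLt)⟩ : Fin 4).succAbove l)))
    else 0 := rfl
  rw [h0]
  simp only [key, Fin.sum_univ_five]
  simp [Fin.succAbove]
  ring

theorem wedge4 {g : Type*} [AddCommGroup g] [Module ℝ g] (p q r s : Module.Dual ℝ g) (v w x y : g) :
    wedgeCov 4 ![p, q, r, s] ![v, w, x, y] = Matrix.det !![p v, q v, r v, s v; p w, q w, r w, s w;
      p x, q x, r x, s x; p y, q y, r y, s y] := by
  unfold wedgeCov
  simp only [AlternatingMap.compLinearMap_apply, Matrix.detRowAlternating]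
  change Matrix.det _ = _
  congr 1
  ext i j
  fin_cases i <;> fin_cases j <;> rfl


theorem wedge4' {g : Type*} [AddCommGroup g] [Module ℝ g] (p q r s : Module.Dual ℝ g) (v w x y : g) :
    wedgeCov 4 ![p, q, r, s] ![v, w, x, y] = 
     p v * (q w * (r x * s y - s x * r y) - r w * (q x * s y - s x * q y) + s w * (q x * r y - r x * q y))
    - q v * (p w * (r x * s y - s x * r y) - r w * (p x * s y - s x * p y) + s w * (p x * r y - r x * p y))
    + r v * (p w * (q x * s y - s x * q y) - q w * (p x * s y - s x * p y) + s w * (p x * q y - q x * p y))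
    - s v * (p w * (q x * r y - r x * q y) - q w * (p x * r y - r x * p y) + r w * (p x * q y - q x * p y)) := by
  rw [wedge4]
  simp [Matrix.det_succ_row_zero, Fin.sum_univ_succ, Fin.succAbove]
  ring

theorem star_tab {g : Type*} [AddCommGroup g] [Module ℝ g] (b : Basis (Fin 7) ℝ (Module.Dual ℝ g))
    (e : Fin 7 → g) (hbe : ∀ i j, b i (e j) = if i = j then 1 else 0) (v : g) :
    stdG2star b ![v, e 0, e 1, e 2] = -b 3 v ∧
    stdG2star b ![v, e 0, e 1, e 3] = b 2 v ∧
    stdG2star b ![v, e 0, e 1, e 4] = b 5 v ∧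
    stdG2star b ![v, e 0, e 1, e 5] = -b 4 v ∧
    stdG2star b ![v, e 0, e 1, e 6] = 0 ∧
    stdG2star b ![v, e 0, e 2, e 3] = -b 1 v ∧
    stdG2star b ![v, e 0, e 2, e 4] = 0 ∧
    stdG2star b ![v, e 0, e 2, e 5] = -b 6 v ∧
    stdG2star b ![v, e 0, e 2, e 6] = b 5 v ∧
    stdG2star b ![v, e 0, e 3, e 4] = -b 6 v ∧
    stdG2star b ![v, e 0, e 3, e 5] = 0 ∧
    stdG2star b ![v, e 0, e 3, e 6] = b 4 v ∧
    stdG2star b ![v, e 0, e 4, e 5] = b 1 v ∧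
    stdG2star b ![v, e 0, e 4, e 6] = -b 3 v ∧
    stdG2star b ![v, e 0, e 5, e 6] = -b 2 v ∧
    stdG2star b ![v, e 1, e 2, e 3] = b 0 v ∧
    stdG2star b ![v, e 1, e 2, e 4] = -b 6 v ∧
    stdG2star b ![v, e 1, e 2, e 5] = 0 ∧
    stdG2star b ![v, e 1, e 2, e 6] = b 4 v ∧
    stdG2star b ![v, e 1, e 3, e 4] = 0 ∧
    stdG2star b ![v, e 1, e 3, e 5] = b 6 v ∧
    stdG2star b ![v, e 1, e 3, e 6] = -b 5 v ∧
    stdG2star b ![v, e 1, e 4, e 5] = -b 0 v ∧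
    stdG2star b ![v, e 1, e 4, e 6] = -b 2 v ∧
    stdG2star b ![v, e 1, e 5, e 6] = b 3 v ∧
    stdG2star b ![v, e 2, e 3, e 4] = b 5 v ∧
    stdG2star b ![v, e 2, e 3, e 5] = -b 4 v ∧
    stdG2star b ![v, e 2, e 3, e 6] = 0 ∧
    stdG2star b ![v, e 2, e 4, e 5] = b 3 v ∧
    stdG2star b ![v, e 2, e 4, e 6] = b 1 v ∧
    stdG2star b ![v, e 2, e 5, e 6] = b 0 v ∧
    stdG2star b ![v, e 3, e 4, e 5] = -b 2 v ∧
    stdG2star b ![v, e 3, e 4, e 6] = b 0 v ∧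
    stdG2star b ![v, e 3, e 5, e 6] = -b 1 v ∧
    stdG2star b ![v, e 4, e 5, e 6] = 0 := by
  simp only [stdG2star, bw, AlternatingMap.add_apply, AlternatingMap.sub_apply, wedge4', hbe]
  refine ⟨?_, ?_, ?_, ?_, ?_, ?_, ?_, ?_, ?_, ?_, ?_, ?_, ?_, ?_, ?_, ?_, ?_, ?_, ?_, ?_, ?_, ?_, ?_, ?_, ?_, ?_, ?_, ?_, ?_, ?_, ?_, ?_, ?_, ?_, ?_⟩ <;> simp

/-- The skew matrix `M_ij = ∑ a_k χ(k,i,j)`. -/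
def Mm (a : Fin 7 → ℝ) : Matrix (Fin 7) (Fin 7) ℝ :=
  !![0, -a 6, a 4, -a 5, -a 2, a 3, a 1;
     a 6, 0, -a 5, -a 4, a 3, a 2, -a 0;
     -a 4, a 5, 0, -a 6, a 0, -a 1, a 3;
     a 5, a 4, a 6, 0, -a 1, -a 0, -a 2;
     a 2, -a 3, -a 0, a 1, 0, a 6, -a 5;
     -a 3, -a 2, a 1, a 0, -a 6, 0, a 4;
     -a 1, a 0, -a 3, a 2, a 5, -a 4, 0]

theorem Mm_skew (a : Fin 7 → ℝ) (i j : Fin 7) : Mm a i j = - Mm a j i := by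
  fin_cases i <;> fin_cases j <;> simp [Mm]

set_option maxHeartbeats 4000000 in
theorem star_closed {g : Type*} [LieRing g] [LieAlgebra ℝ g] (b : Basis (Fin 7) ℝ (Module.Dual ℝ g))
    (e : Fin 7 → g) (hbe : ∀ i j, b i (e j) = if i = j then 1 else 0)
    (α : g →ₗ[ℝ] ℝ) (D : g →ₗ[ℝ] g) (hbr : ∀ x y : g, ⁅x, y⁆ = α x • D y - α y • D x)
    (hA : ∀ k, ∑ i, α (e i) * b i (D (e k)) = 0)
    (hΨ : ceDiff 3 ⇑(stdG2star b) = 0) (i j : Fin 7) :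
    ∑ k, b i (D (e k)) * Mm (fun k => α (e k)) k j + ∑ k, Mm (fun k => α (e k)) i k * b j (D (e k))
      = (∑ k, b k (D (e k))) * Mm (fun k => α (e k)) i j := by
  have lin : ∀ (c c' : ℝ) (v v' x y z : g), stdG2star b ![c • v - c' • v', x, y, z] =
      c * stdG2star b ![v, x, y, z] - c' * stdG2star b ![v', x, y, z] := by
    intro c c' v v' x y z
    have := (stdG2star b).map_update_sub ![v, x, y, z] 0 (c • v) (c' • v')
    have h1 := (stdG2star b).map_update_smul ![v, x, y, z] 0 c v
    have h2 := (stdG2star b).map_update_smul ![v, x, y, z] 0 c' v'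
    have upd : ∀ w, Function.update ![v, x, y, z] 0 w = ![w, x, y, z] := by
      intro w; funext i; fin_cases i <;> rfl
    rw [upd, upd, upd] at this
    rw [upd, upd] at h1 h2
    rw [this, h1, h2]; rfl
  have H : ∀ p q r s t : Fin 7, ceDiff 3 ⇑(stdG2star b) ![e p, e q, e r, e s, e t] = 0 := by
    intro p q r s t; rw [hΨ]; rfl
  simp only [ce_expand, hbr, lin] at H
  have tab := fun k => star_tab b e hbe (D (e k))
  obtain ⟨d, hd⟩ : ∃ d : Fin 7 → Fin 7 → ℝ, ∀ i k, b i (D (e k)) = d i k := ⟨_, fun _ _ => rfl⟩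
  obtain ⟨a, ha⟩ : ∃ a : Fin 7 → ℝ, ∀ k, α (e k) = a k := ⟨_, fun _ => rfl⟩
  simp only [hd, ha, Matrix.cons_val] at H hA tab ⊢
  obtain ⟨Q, hQ⟩ : ∃ Q : Fin 7 → Fin 7 → Fin 7 → Fin 7 → ℝ,
      ∀ k r s t, stdG2star b ![D (e k), e r, e s, e t] = Q k r s t := ⟨_, fun _ _ _ _ => rfl⟩
  simp only [hQ] at H tab
  clear hQ lin hd ha hΨ hbr hbe
  wlog hij : i < j generalizing i j
  · rcases lt_trichotomy i j with h | h | h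
    · exact this i j h
    · subst h
      have e1 : Mm a i i = 0 := by
        have := Mm_skew a i i; linarith
      rw [e1, ← Finset.sum_add_distrib, mul_zero]
      refine Finset.sum_eq_zero fun k _ => ?_
      rw [Mm_skew _ i k]; ring
    · have h' := this j i h
      rw [Mm_skew _ i j, mul_neg, ← h', neg_add, add_comm, ← Finset.sum_neg_distrib,
        ← Finset.sum_neg_distrib]
      congr 1 <;> refine Finset.sum_congr rfl fun k _ => ?_
      · rw [Mm_skew _ i k]; ring
      · rw [Mm_skew _ k j]; ring
  simp only [Fin.sum_univ_seven] at hA ⊢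
  fin_cases i <;> fin_cases j <;> first | (exact absurd hij (by decide)) | skip
  · have h := H 2 3 4 5 6
    simp only [tab] at h
    simp [Mm]
    linear_combination h + hA 6
  · have h := H 1 3 4 5 6
    simp only [tab] at h
    simp [Mm]
    linear_combination -h - hA 4
  · have h := H 1 2 4 5 6
    simp only [tab] at h
    simp [Mm]
    linear_combination h + hA 5
  · have h := H 1 2 3 5 6
    simp only [tab] at h
    simp [Mm]
    linear_combination -h + hA 2
  · have h := H 1 2 3 4 6
    simp only [tab] at h
    simp [Mm]
    linear_combination h - hA 3
  · have h := H 1 2 3 4 5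
    simp only [tab] at h
    simp [Mm]
    linear_combination -h - hA 1
  · have h := H 0 3 4 5 6
    simp only [tab] at h
    simp [Mm]
    linear_combination h + hA 5
  · have h := H 0 2 4 5 6
    simp only [tab] at h
    simp [Mm]
    linear_combination -h + hA 4
  · have h := H 0 2 3 5 6
    simp only [tab] at h
    simp [Mm]
    linear_combination h - hA 3
  · have h := H 0 2 3 4 6
    simp only [tab] at h
    simp [Mm]
    linear_combination -h - hA 2
  · have h := H 0 2 3 4 5
    simp only [tab] at h
    simp [Mm]
    linear_combination h + hA 0
  · have h := H 0 1 4 5 6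
    simp only [tab] at h
    simp [Mm]
    linear_combination h + hA 6
  · have h := H 0 1 3 5 6
    simp only [tab] at h
    simp [Mm]
    linear_combination -h - hA 0
  · have h := H 0 1 3 4 6
    simp only [tab] at h
    simp [Mm]
    linear_combination h + hA 1
  · have h := H 0 1 3 4 5
    simp only [tab] at h
    simp [Mm]
    linear_combination -h - hA 3
  · have h := H 0 1 2 5 6
    simp only [tab] at h
    simp [Mm]
    linear_combination h + hA 1
  · have h := H 0 1 2 4 6
    simp only [tab] at h
    simp [Mm]
    linear_combination -h + hA 0
  · have h := H 0 1 2 4 5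
    simp only [tab] at h
    simp [Mm]
    linear_combination h + hA 2
  · have h := H 0 1 2 3 6
    simp only [tab] at h
    simp [Mm]
    linear_combination h - hA 6
  · have h := H 0 1 2 3 5
    simp only [tab] at h
    simp [Mm]
    linear_combination -h + hA 5
  · have h := H 0 1 2 3 4
    simp only [tab] at h
    simp [Mm]
    linear_combination h - hA 4

theorem Mm_rank (a : Fin 7 → ℝ) (ha : a ≠ 0) : 4 ≤ (Mm a).rank := by
  by_contra hlt
  have key : ∀ s : Fin 4 → Fin 7, ((Mm a).submatrix s s).det = 0 := by
    intro s
    by_contra hd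
    have h1 := Matrix.rank_of_det_ne_zero hd
    have h2 := Matrix.rank_submatrix_le (Mm a) s s
    rw [h1, Fintype.card_fin] at h2
    exact hlt h2
  have pf : ∀ A : Matrix (Fin 4) (Fin 4) ℝ, (∀ i j, A i j = - A j i) →
      A.det = (A 0 1 * A 2 3 - A 0 2 * A 1 3 + A 0 3 * A 1 2) ^ 2 := by
    intro A hA
    have h0 : ∀ i, A i i = 0 := fun i => by have := hA i i; linarith
    simp [Matrix.det_succ_row_zero, Fin.sum_univ_succ, Fin.succAbove, h0, hA 1 0, hA 2 0, hA 3 0,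
      hA 2 1, hA 3 1, hA 3 2]
    ring
  have k1 := key ![0, 1, 2, 3]
  have k2 := key ![0, 1, 4, 5]
  have k3 := key ![2, 3, 4, 5]
  have sk : ∀ s : Fin 4 → Fin 7, ∀ i j, (Mm a).submatrix s s i j = - (Mm a).submatrix s s j i :=
    fun s i j => Mm_skew a _ _
  rw [pf _ (sk _)] at k1 k2 k3
  have k1 := pow_eq_zero_iff (two_ne_zero) |>.1 k1
  have k2 := pow_eq_zero_iff (two_ne_zero) |>.1 k2
  have k3 := pow_eq_zero_iff (two_ne_zero) |>.1 k3
  simp [Mm] at k1 k2 k3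
  have k1 : a 4 ^ 2 + a 5 ^ 2 + a 6 ^ 2 = 0 := by linarith
  have k2 : a 2 ^ 2 + a 3 ^ 2 - a 6 ^ 2 = 0 := by linarith
  have k3 : a 0 ^ 2 + a 1 ^ 2 - a 6 ^ 2 = 0 := by linarith
  have s0 := sq_nonneg (a 0)
  have s1 := sq_nonneg (a 1)
  have s2 := sq_nonneg (a 2)
  have s3 := sq_nonneg (a 3)
  have s4 := sq_nonneg (a 4)
  have s5 := sq_nonneg (a 5)
  have s6 := sq_nonneg (a 6)
  apply ha
  funext i
  apply pow_eq_zero_iff (two_ne_zero) |>.1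
  fin_cases i <;> simp only [Fin.zero_eta, Fin.mk_one, Fin.reduceFinMk] <;> linarith

theorem setup7 {g : Type*} [LieRing g] [LieAlgebra ℝ g] [FiniteDimensional ℝ g]
    (hg : finrank ℝ g = 7)
    (u : LieIdeal ℝ g) (habel : ∀ x ∈ u, ∀ y ∈ u, ⁅x, y⁆ = (0 : g))
    (hu : finrank ℝ ↥u = 6) (e₇ : g) (he : e₇ ∉ u) :
    ∃ α : g →ₗ[ℝ] ℝ, ∃ D : g →ₗ[ℝ] g, α e₇ = 1 ∧ (∀ x, x ∈ u ↔ α x = 0) ∧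
      (∀ x, D x = ⁅e₇, x⁆) ∧ (∀ x, D x ∈ u) ∧ (∀ x, x - α x • e₇ ∈ u) ∧
      (∀ x y : g, ⁅x, y⁆ = α x • D y - α y • D x) := by
  obtain ⟨f, hf, hk⟩ := Submodule.exists_le_ker_of_notMem (p := u.toSubmodule) (v := e₇) he
  have hker : LinearMap.ker f = u.toSubmodule := by
    symm
    apply Submodule.eq_of_le_of_finrank_eq hk
    have h1 := Module.Dual.finrank_ker_add_one_of_ne_zero (f := f) (by rintro rfl; exact hf rfl)
    have h2 : finrank ℝ u.toSubmodule = 6 := hu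
    omega
  have hα : ∀ x, x ∈ u ↔ ((f e₇)⁻¹ • f) x = 0 := by
    intro x
    rw [← LieSubmodule.mem_toSubmodule, ← hker]
    simp [hf]
  have h1 : ((f e₇)⁻¹ • f) e₇ = 1 := by simp [hf]
  generalize (f e₇)⁻¹ • f = α at hα h1
  have hm : ∀ x, x - α x • e₇ ∈ u := fun x => by rw [hα]; simp [h1]
  refine ⟨α, (LieAlgebra.ad ℝ g e₇ : g →ₗ[ℝ] g), h1, hα, fun x => rfl, ?_, hm, ?_⟩
  · intro x
    have := lie_mem_right ℝ g u e₇ _ (hm x)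
    simpa using this
  · intro x y
    have := habel _ (hm x) _ (hm y)
    simp only [sub_lie, lie_sub, smul_lie, lie_smul, lie_self, smul_zero, sub_zero] at this
    simp only [LieAlgebra.ad_apply]
    rw [← lie_skew e₇ x]
    rw [← sub_eq_zero, ← this]
    module

theorem forward_symp {g : Type*} [LieRing g] [LieAlgebra ℝ g] [FiniteDimensional ℝ g]
    (hg : finrank ℝ g = 7)
    (u : LieIdeal ℝ g) (habel : ∀ x ∈ u, ∀ y ∈ u, ⁅x, y⁆ = (0 : g))
    (hu : finrank ℝ ↥u = 6) (e₇ : g) (he : e₇ ∉ u)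
    (adE : ↥u →ₗ[ℝ] ↥u) (hadE : ∀ x : ↥u, (adE x : g) = ⁅e₇, (x : g)⁆)
    (b : Basis (Fin 7) ℝ (Module.Dual ℝ g)) (hΨ : ceDiff 3 ⇑(stdG2star b) = 0) :
    ∃ W : Submodule ℝ ↥u, 4 ≤ finrank ℝ W ∧ SympOn adE (LinearMap.trace ℝ ↥u adE) W := by
  obtain ⟨α, D, h1, hα, hD, hDu, hm, hbr⟩ := setup7 hg u habel hu e₇ he
  set e : Basis (Fin 7) ℝ g := b.dualBasis.map (Module.evalEquiv ℝ g).symm with he_def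
  have hbe : ∀ i j, b i (e j) = if i = j then 1 else 0 := by
    intro i j
    rw [he_def, Basis.map_apply, Module.apply_evalEquiv_symm_apply, Basis.dualBasis_apply_self]
  have hrep : ∀ x i, e.repr x i = b i x := by
    intro x i
    have h := congrArg (b i) (e.sum_repr x)
    rw [← h, map_sum]
    simp [-Basis.sum_repr, hbe]
  set a : Fin 7 → ℝ := fun k => α (e k) with ha_def
  set d : Matrix (Fin 7) (Fin 7) ℝ := Matrix.of fun i k => b i (D (e k)) with hd_def
  have hαx : ∀ x, α x = ∑ i, a i * b i x := by
    intro x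
    conv_lhs => rw [← e.sum_repr x]
    simp [map_sum, hrep, ha_def, mul_comm]
  have hA : ∀ k, ∑ i, α (e i) * b i (D (e k)) = 0 := by
    intro k
    rw [← hαx]
    exact (hα _).1 (hDu _)
  set t : ℝ := ∑ k, b k (D (e k)) with ht
  set M := Mm a with hM
  have heq : d * M + M * d.transpose = t • M := by
    ext i j
    have := star_closed b e hbe α D hbr hA hΨ i j
    simp only [Matrix.add_apply, Matrix.mul_apply, Matrix.smul_apply, smul_eq_mul]
    exact this
  have hskew : M.transpose = -M := by
    ext i j
    exact Mm_skew a j i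
  have htr : LinearMap.trace ℝ ↥u adE = t := by
    let D' : g →ₗ[ℝ] ↥u := LinearMap.codRestrict u.toSubmodule D hDu
    have e1 : adE = D' ∘ₗ u.toSubmodule.subtype := by
      ext x
      rw [hadE]
      exact (hD _).symm
    have e2 : D = u.toSubmodule.subtype ∘ₗ D' := by
      ext x; rfl
    have e3 : LinearMap.trace ℝ g D = LinearMap.trace ℝ ↥u adE := by
      rw [e1]
      conv_lhs => rw [e2]
      exact LinearMap.trace_comp_comm' _ _
    rw [← e3, LinearMap.trace_eq_matrix_trace ℝ e D, Matrix.trace]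
    simp [LinearMap.toMatrix_apply, hrep, ht]
  have haM : Matrix.vecMul a M = 0 := by
    funext j
    rw [hM]
    fin_cases j <;> simp [Matrix.vecMul, dotProduct, Fin.sum_univ_seven, Mm] <;> ring
  let P0 : (Fin 7 → ℝ) →ₗ[ℝ] g := e.equivFun.symm.toLinearMap ∘ₗ M.mulVecLin
  have hbP : ∀ φ i, b i (P0 φ) = M.mulVec φ i := by
    intro φ i
    rw [← hrep]
    change e.equivFun (e.equivFun.symm (M.mulVec φ)) i = _
    rw [LinearEquiv.apply_symm_apply]
  have hext : ∀ x y : g, (∀ i, b i x = b i y) → x = y := by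
    intro x y h
    apply e.repr.injective
    ext i
    rw [hrep, hrep, h]
  have hP0u : ∀ φ, P0 φ ∈ u := by
    intro φ
    rw [hα, hαx]
    simp only [hbP]
    change a ⬝ᵥ M.mulVec φ = 0
    rw [Matrix.dotProduct_mulVec, haM, zero_dotProduct]
  let P : (Fin 7 → ℝ) →ₗ[ℝ] ↥u := LinearMap.codRestrict u.toSubmodule P0 hP0u
  have hP : ∀ φ, ((P φ : ↥u) : g) = P0 φ := fun φ => rfl
  have hbD : ∀ x i, b i (D x) = d.mulVec (fun k => b k x) i := by
    intro x i
    conv_lhs => rw [← e.sum_repr x]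
    simp [map_sum, hrep, Matrix.mulVec, dotProduct, hd_def, mul_comm]
  let A' : (Fin 7 → ℝ) →ₗ[ℝ] (Fin 7 → ℝ) := t • LinearMap.id - d.transpose.mulVecLin
  have hA' : ∀ φ, A' φ = t • φ - d.transpose.mulVec φ := fun φ => rfl
  refine ⟨LinearMap.range P, ?_, ?_⟩
  · have hr := Mm_rank a (by
      intro h0
      have := hαx e₇
      rw [h1, h0] at this
      simp at this)
    rw [← hM, Matrix.rank] at hr
    have hker : LinearMap.ker P = LinearMap.ker M.mulVecLin := by
      rw [LinearMap.ker_codRestrict]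
      exact LinearEquiv.ker_comp _ _
    have f1 := LinearMap.finrank_range_add_finrank_ker P
    have f2 := LinearMap.finrank_range_add_finrank_ker M.mulVecLin
    rw [hker] at f1
    omega
  · rw [htr]
    have hq : ∀ x y : Fin 7 → ℝ, Matrix.toLinearMap₂' ℝ M x y = x ⬝ᵥ M.mulVec y :=
      fun x y => Matrix.toLinearMap₂'_apply' M x y
    have hsw : ∀ x y : Fin 7 → ℝ, x ⬝ᵥ M.mulVec y = - (y ⬝ᵥ M.mulVec x) := by
      intro x y
      rw [Matrix.dotProduct_mulVec, ← Matrix.mulVec_transpose, hskew, Matrix.neg_mulVec,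
        neg_dotProduct, dotProduct_comm]
    refine sympOn_range adE t P A' (Matrix.toLinearMap₂' ℝ M) ?_ ?_ ?_ ?_
    · intro φ
      apply Subtype.ext
      rw [hadE, ← hD]
      apply hext
      intro i
      rw [hP, hP, hbD, hbP]
      have : (fun k => b k (P0 φ)) = M.mulVec φ := funext fun k => hbP φ k
      rw [this, hA', Matrix.mulVec_mulVec, Matrix.mulVec_sub, Matrix.mulVec_mulVec,
        Matrix.mulVec_smul, ← Matrix.smul_mulVec, ← heq, Matrix.add_mulVec, add_sub_cancel_right]
    · intro x
      rw [hq]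
      have := hsw x x
      linarith
    · intro x
      have e1 : P x = 0 ↔ M.mulVec x = 0 := by
        constructor
        · intro h
          funext i
          rw [← hbP, ← hP, h]; simp
        · intro h
          apply Subtype.ext
          apply hext
          intro i
          rw [hP, hbP, h]; simp
      rw [e1]
      constructor
      · intro h y
        rw [hq, hsw, h]; simp
      · intro h
        apply dotProduct_eq_zero_iff.1
        intro y
        rw [dotProduct_comm, ← neg_eq_zero, ← hsw, ← hq, h]
    · intro x y
      simp only [hq, hA']
      have e1 : ∀ x y : Fin 7 → ℝ, (d.transpose.mulVec x) ⬝ᵥ M.mulVec y = x ⬝ᵥ (d * M).mulVec y := by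
        intro x y
        rw [Matrix.mulVec_transpose, ← Matrix.dotProduct_mulVec, Matrix.mulVec_mulVec]
      have e2 : x ⬝ᵥ (d * M + M * d.transpose).mulVec y = t * (x ⬝ᵥ M.mulVec y) := by
        rw [heq, Matrix.smul_mulVec, dotProduct_smul, smul_eq_mul]
      rw [Matrix.add_mulVec, dotProduct_add] at e2
      rw [sub_dotProduct, Matrix.mulVec_sub, dotProduct_sub, e1, Matrix.mulVec_mulVec,
        Matrix.mulVec_smul, smul_dotProduct, dotProduct_smul, smul_eq_mul]
      linarith

theorem symp_reduce {U : Type*} [AddCommGroup U] [Module ℝ U] [FiniteDimensional ℝ U]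
    (hU : finrank ℝ U = 6) (A : U →ₗ[ℝ] U) (W : Submodule ℝ U) (hW : 4 ≤ finrank ℝ W)
    (hS : SympOn A (LinearMap.trace ℝ U A) W) :
    ∃ W : Submodule ℝ U, finrank ℝ W = 4 ∧ SympOn A (LinearMap.trace ℝ U A) W := by
  obtain ⟨hinv, τ, halt, hnd, hτ⟩ := id hS
  have hev := even_of_symp τ halt hnd
  have hle := Submodule.finrank_le W
  rw [hU] at hle
  have h46 : finrank ℝ W = 4 ∨ finrank ℝ W = 6 := by
    obtain ⟨k, hk⟩ := hev
    omega
  rcases h46 with h | h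
  · exact ⟨W, h, hS⟩
  · have hT : W = ⊤ := Submodule.eq_top_of_finrank_eq (by rw [h, hU])
    subst hT
    let j : U →ₗ[ℝ] (⊤ : Submodule ℝ U) := (LinearEquiv.ofTop ⊤ rfl).symm.toLinearMap
    have hj : ∀ x, ((j x : (⊤ : Submodule ℝ U)) : U) = x := fun x => rfl
    let σ : U →ₗ[ℝ] U →ₗ[ℝ] ℝ := τ.compl₁₂ j j
    have hσ : ∀ x y, σ x y = τ (j x) (j y) := fun x y => rfl
    have hnd' : ∀ x, (∀ y, σ x y = 0) → x = 0 := by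
      intro x hx
      have := hnd (j x) (fun y => hx y)
      rw [← hj x, this]; rfl
    have hA : ∀ x y, σ (A x) y + σ x (A y) = LinearMap.trace ℝ U A * σ x y := by
      intro x y
      exact hτ (j x) (j y) (j (A x)) (j (A y)) rfl rfl
    have h0 := trace_of_symp σ hnd' A _ hA
    rw [hU] at h0
    have h0 : LinearMap.trace ℝ U A = 0 := by push_cast at h0; linarith
    rw [h0] at hA ⊢
    exact sp6_case hU σ (fun x => halt (j x)) hnd' A (fun x y => by rw [hA, zero_mul])

theorem closed_abs {g : Type*} [LieRing g] [LieAlgebra ℝ g] (α : g →ₗ[ℝ] ℝ) (D : g →ₗ[ℝ] g)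
    (hbr : ∀ x y : g, ⁅x, y⁆ = α x • D y - α y • D x) (hαD : ∀ x, α (D x) = 0)
    (Ψ : g [⋀^Fin 4]→ₗ[ℝ] ℝ) (Ω : g → g → g → g → ℝ) (ρ : g → g → g → ℝ)
    (hΨ : ∀ x y z w, Ψ ![x, y, z, w] = Ω x y z w + α x * ρ y z w - α y * ρ x z w
      + α z * ρ x y w - α w * ρ x y z)
    (hΩ : ∀ x y z w, Ω (D x) y z w - Ω (D y) x z w + Ω (D z) x y w - Ω (D w) x y z = 0) :
    ceDiff 3 ⇑Ψ = 0 := by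
  funext x
  have lin : ∀ (c c' : ℝ) (v v' x y z : g), Ψ ![c • v - c' • v', x, y, z] =
      c * Ψ ![v, x, y, z] - c' * Ψ ![v', x, y, z] := by
    intro c c' v v' x y z
    have := Ψ.map_update_sub ![v, x, y, z] 0 (c • v) (c' • v')
    have h1 := Ψ.map_update_smul ![v, x, y, z] 0 c v
    have h2 := Ψ.map_update_smul ![v, x, y, z] 0 c' v'
    have upd : ∀ w, Function.update ![v, x, y, z] 0 w = ![w, x, y, z] := by
      intro w; funext i; fin_cases i <;> rfl
    rw [upd, upd, upd] at this
    rw [upd, upd] at h1 h2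
    rw [this, h1, h2]; rfl
  rw [ce_expand]
  simp only [hbr, lin, hΨ, hαD, Pi.zero_apply]
  have e0 := hΩ (x 1) (x 2) (x 3) (x 4)
  have e1 := hΩ (x 0) (x 2) (x 3) (x 4)
  have e2 := hΩ (x 0) (x 1) (x 3) (x 4)
  have e3 := hΩ (x 0) (x 1) (x 2) (x 4)
  have e4 := hΩ (x 0) (x 1) (x 2) (x 3)
  linear_combination -α (x 0) * e0 + α (x 1) * e1 - α (x 2) * e2 + α (x 3) * e3 - α (x 4) * e4

/-- The form `E4 ∧ E5 ∧ (E0 ∧ E1 + E2 ∧ E3)` in coordinates. -/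
def Om (x y z w : Fin 6 → ℝ) : ℝ :=
  (x 4 * y 5 - x 5 * y 4) * (z 0 * w 1 - z 1 * w 0 + z 2 * w 3 - z 3 * w 2)
  - (x 4 * z 5 - x 5 * z 4) * (y 0 * w 1 - y 1 * w 0 + y 2 * w 3 - y 3 * w 2)
  + (x 4 * w 5 - x 5 * w 4) * (y 0 * z 1 - y 1 * z 0 + y 2 * z 3 - y 3 * z 2)
  + (y 4 * z 5 - y 5 * z 4) * (x 0 * w 1 - x 1 * w 0 + x 2 * w 3 - x 3 * w 2)
  - (y 4 * w 5 - y 5 * w 4) * (x 0 * z 1 - x 1 * z 0 + x 2 * z 3 - x 3 * z 2)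
  + (z 4 * w 5 - z 5 * w 4) * (x 0 * y 1 - x 1 * y 0 + x 2 * y 3 - x 3 * y 2)

theorem Om_inv (p q r s : ℝ) (n : Fin 4 → Fin 4 → ℝ) (k l : Fin 4 → ℝ) (δ : (Fin 6 → ℝ) → Fin 6 → ℝ)
    (h0 : ∀ x, δ x 0 = n 0 0 * x 0 + n 0 1 * x 1 - n 3 1 * x 2 + n 2 1 * x 3 + k 0 * x 4 + l 0 * x 5)
    (h1 : ∀ x, δ x 1 = n 1 0 * x 0 + (-(p + s) - n 0 0) * x 1 + n 3 0 * x 2 - n 2 0 * x 3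
      + k 1 * x 4 + l 1 * x 5)
    (h2 : ∀ x, δ x 2 = n 2 0 * x 0 + n 2 1 * x 1 + n 2 2 * x 2 + n 2 3 * x 3 + k 2 * x 4 + l 2 * x 5)
    (h3 : ∀ x, δ x 3 = n 3 0 * x 0 + n 3 1 * x 1 + n 3 2 * x 2 + (-(p + s) - n 2 2) * x 3
      + k 3 * x 4 + l 3 * x 5)
    (h4 : ∀ x, δ x 4 = p * x 4 + q * x 5) (h5 : ∀ x, δ x 5 = r * x 4 + s * x 5)
    (x y z w : Fin 6 → ℝ) :
    Om (δ x) y z w - Om (δ y) x z w + Om (δ z) x y w - Om (δ w) x y z = 0 := by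
  simp only [Om, h0, h1, h2, h3, h4, h5]
  ring

theorem back_coord {g : Type*} [LieRing g] [LieAlgebra ℝ g] [FiniteDimensional ℝ g]
    (hg : finrank ℝ g = 7) (α : g →ₗ[ℝ] ℝ) (D : g →ₗ[ℝ] g)
    (hbr : ∀ x y : g, ⁅x, y⁆ = α x • D y - α y • D x) (hαD : ∀ x, α (D x) = 0)
    (E : g →ₗ[ℝ] (Fin 6 → ℝ)) (hE : ∀ x, α x = 0 → E x = 0 → x = 0)
    (δ : (Fin 6 → ℝ) → Fin 6 → ℝ) (hδ : ∀ x, E (D x) = δ (E x))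
    (hO : ∀ x y z w : Fin 6 → ℝ,
      Om (δ x) y z w - Om (δ y) x z w + Om (δ z) x y w - Om (δ w) x y z = 0) :
    ∃ Ψ : g [⋀^Fin 4]→ₗ[ℝ] ℝ, ceDiff 3 ⇑Ψ = 0 ∧
        ∃ b : Basis (Fin 7) ℝ (Module.Dual ℝ g), Ψ = stdG2star b := by
  let c : Fin 6 → (g →ₗ[ℝ] ℝ) := fun i => LinearMap.proj i ∘ₗ E
  let F : g →ₗ[ℝ] (Fin 7 → ℝ) := LinearMap.pi
    ![α + c 0, c 3, c 1, c 2, c 0, c 4 + c 3, c 5 - c 2]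
  have hF : ∀ x, F x = ![α x + E x 0, E x 3, E x 1, E x 2, E x 0, E x 4 + E x 3, E x 5 - E x 2] := by
    intro x
    funext i
    fin_cases i <;> rfl
  have hinj : Function.Injective F := by
    rw [injective_iff_map_eq_zero]
    intro x hx
    rw [hF] at hx
    have a0 := congrFun hx 0
    have a1 := congrFun hx 1
    have a2 := congrFun hx 2
    have a3 := congrFun hx 3
    have a4 := congrFun hx 4
    have a5 := congrFun hx 5
    have a6 := congrFun hx 6
    simp at a0 a1 a2 a3 a4 a5 a6
    apply hE x
    · linarith
    · funext i
      fin_cases i <;> simp <;> linarith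
  let Fe : g ≃ₗ[ℝ] (Fin 7 → ℝ) := LinearEquiv.ofInjectiveOfFinrankEq F hinj (by simp [hg])
  have hFe : ∀ x, Fe x = F x := fun x => rfl
  let b := (Basis.ofEquivFun Fe).dualBasis
  have hb : ∀ i x, b i x = F x i := by
    intro i x
    rw [Basis.dualBasis_apply, Basis.ofEquivFun_repr_apply, hFe]
  refine ⟨stdG2star b, ?_, b, rfl⟩
  let d3 : Fin 7 → Fin 7 → Fin 7 → (Fin 7 → ℝ) → (Fin 7 → ℝ) → (Fin 7 → ℝ) → ℝ :=
    fun i j k x y z => x i * (y j * z k - y k * z j) - x j * (y i * z k - y k * z i)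
      + x k * (y i * z j - y j * z i)
  refine closed_abs α D hbr hαD _ (fun x y z w => Om (E x) (E y) (E z) (E w))
    (fun x y z => d3 1 2 3 (F x) (F y) (F z) - d3 1 4 5 (F x) (F y) (F z) +
      d3 3 4 6 (F x) (F y) (F z) + d3 2 5 6 (F x) (F y) (F z)) ?_ ?_
  · intro x y z w
    simp only [stdG2star, bw, AlternatingMap.add_apply, AlternatingMap.sub_apply, wedge4', hb]
    simp only [d3, hF, Om, Matrix.cons_val]
    ring
  · intro x y z w
    simp only [hδ]
    exact hO _ _ _ _

theorem backward {g : Type*} [LieRing g] [LieAlgebra ℝ g] [FiniteDimensional ℝ g]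
    (hg : finrank ℝ g = 7)
    (u : LieIdeal ℝ g) (habel : ∀ x ∈ u, ∀ y ∈ u, ⁅x, y⁆ = (0 : g))
    (hu : finrank ℝ ↥u = 6) (e₇ : g) (he : e₇ ∉ u)
    (V₂ V₄ : Submodule ℝ ↥u) (hc : IsCompl V₂ V₄)
    (h2 : finrank ℝ ↥V₂ = 2) (h4 : finrank ℝ ↥V₄ = 4)
    (ω : ↥V₄ →ₗ[ℝ] ↥V₄ →ₗ[ℝ] ℝ) (halt : ∀ v : ↥V₄, ω v v = 0)
    (hnd : ∀ v : ↥V₄, (∀ w : ↥V₄, ω v w = 0) → v = 0)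
    (adE : ↥u →ₗ[ℝ] ↥u) (hadE : ∀ x : ↥u, (adE x : g) = ⁅e₇, (x : g)⁆)
    (T : ↥u ≃ₗ[ℝ] ↥u) (f : ↥u →ₗ[ℝ] ↥u)
    (hf : f = T.toLinearMap ∘ₗ adE ∘ₗ T.symm.toLinearMap)
    (hV : ∀ x : ↥u, x ∈ V₄ → f x ∈ V₄)
    (f₄ : ↥V₄ →ₗ[ℝ] ↥V₄) (hf₄ : ∀ x y : ↥V₄, ω (f₄ x) y + ω x (f₄ y) = 0)
    (hN : ∀ x : ↥V₄, (V₄.projectionOnto V₂ hc.symm) (f ↑x) =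
              -((LinearMap.trace ℝ ↥V₂)
                  ((V₂.projectionOnto V₄ hc) ∘ₗ f ∘ₗ V₂.subtype) / 2) • x + f₄ x) :
    ∃ Ψ : g [⋀^Fin 4]→ₗ[ℝ] ℝ, ceDiff 3 ⇑Ψ = 0 ∧
        ∃ b : Basis (Fin 7) ℝ (Module.Dual ℝ g), Ψ = stdG2star b := by
  obtain ⟨α, D, h1, hα, hD, hDu, hm, hbr⟩ := setup7 hg u habel hu e₇ he
  have hαD : ∀ x, α (D x) = 0 := fun x => (hα _).1 (hDu x)
  obtain ⟨B, b01, b23, b02, b03, b12, b13⟩ := darboux4 h4 ω halt hnd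
  let C : Basis (Fin 2) ℝ V₂ := Module.finBasisOfFinrankEq ℝ V₂ h2
  set π₂ := V₂.projectionOnto V₄ hc with hπ₂
  set π₄ := V₄.projectionOnto V₂ hc.symm with hπ₄
  set f₂ : V₂ →ₗ[ℝ] V₂ := π₂ ∘ₗ f ∘ₗ V₂.subtype with hf₂
  set t := LinearMap.trace ℝ ↥V₂ f₂ with ht
  let q : g →ₗ[ℝ] ↥u := LinearMap.codRestrict u.toSubmodule (LinearMap.id - α.smulRight e₇) hm
  have hq : ∀ x, ((q x : ↥u) : g) = x - α x • e₇ := fun x => rfl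
  have hqD : ∀ x, q (D x) = adE (q x) := by
    intro x
    apply Subtype.ext
    rw [hq, hαD, hadE, hq, hD]
    simp
  have hTf : ∀ x, T (adE x) = f (T x) := by intro x; rw [hf]; simp
  have hdec : ∀ y : ↥u, y = (π₂ y : ↥u) + (π₄ y : ↥u) := by
    intro y
    exact (Submodule.projection_add_projection_eq_self hc y).symm
  have hp2 : ∀ y, π₂ (f y) = f₂ (π₂ y) := by
    intro y
    conv_lhs => rw [hdec y]
    rw [map_add, map_add]
    have : π₂ (f (π₄ y : ↥u)) = 0 := by
      rw [hπ₂]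
      exact (Submodule.projectionOnto_apply_eq_zero_iff hc).2 (hV _ (π₄ y).2)
    rw [this, add_zero]; rfl
  have hp4 : ∀ y, π₄ (f y) = π₄ (f (π₂ y : ↥u)) + (-(t / 2) • π₄ y + f₄ (π₄ y)) := by
    intro y
    conv_lhs => rw [hdec y]
    rw [map_add, map_add, hN]
  let E : g →ₗ[ℝ] (Fin 6 → ℝ) := LinearMap.pi
    ![B.coord 0 ∘ₗ π₄ ∘ₗ T.toLinearMap ∘ₗ q, B.coord 1 ∘ₗ π₄ ∘ₗ T.toLinearMap ∘ₗ q,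
      B.coord 2 ∘ₗ π₄ ∘ₗ T.toLinearMap ∘ₗ q, B.coord 3 ∘ₗ π₄ ∘ₗ T.toLinearMap ∘ₗ q,
      C.coord 0 ∘ₗ π₂ ∘ₗ T.toLinearMap ∘ₗ q, C.coord 1 ∘ₗ π₂ ∘ₗ T.toLinearMap ∘ₗ q]
  have hEx : ∀ x, E x = ![B.repr (π₄ (T (q x))) 0, B.repr (π₄ (T (q x))) 1,
      B.repr (π₄ (T (q x))) 2, B.repr (π₄ (T (q x))) 3,
      C.repr (π₂ (T (q x))) 0, C.repr (π₂ (T (q x))) 1] := by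
    intro x
    funext i
    fin_cases i <;> rfl
  -- matrices
  let n : Fin 4 → Fin 4 → ℝ := fun i j => B.repr (-(t / 2) • B j + f₄ (B j)) i
  let k : Fin 4 → ℝ := fun i => B.repr (π₄ (f (C 0 : ↥u))) i
  let l : Fin 4 → ℝ := fun i => B.repr (π₄ (f (C 1 : ↥u))) i
  let m : Fin 2 → Fin 2 → ℝ := fun i j => C.repr (f₂ (C j)) i
  have htm : t = m 0 0 + m 1 1 := by
    rw [ht, LinearMap.trace_eq_matrix_trace ℝ C, Matrix.trace_fin_two]
    simp [LinearMap.toMatrix_apply, m]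
  have gen2 : ∀ (L : V₂ →ₗ[ℝ] ℝ) z, L z = L (C 0) * C.repr z 0 + L (C 1) * C.repr z 1 := by
    intro L z
    have h := congrArg L (C.sum_repr z)
    rw [← h, Fin.sum_univ_two, map_add, map_smul, map_smul, smul_eq_mul, smul_eq_mul]
    ring
  have c2 : ∀ y i, C.repr (π₂ (f y)) i = m i 0 * C.repr (π₂ y) 0 + m i 1 * C.repr (π₂ y) 1 := by
    intro y i
    rw [hp2]
    exact gen2 (C.coord i ∘ₗ f₂) (π₂ y)
  have c4 : ∀ y i, B.repr (π₄ (f y)) i = n i 0 * B.repr (π₄ y) 0 + n i 1 * B.repr (π₄ y) 1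
      + n i 2 * B.repr (π₄ y) 2 + n i 3 * B.repr (π₄ y) 3
      + k i * C.repr (π₂ y) 0 + l i * C.repr (π₂ y) 1 := by
    intro y i
    rw [hp4]
    have e1 : B.repr (π₄ (f (π₂ y : ↥u))) i = k i * C.repr (π₂ y) 0 + l i * C.repr (π₂ y) 1 :=
      gen2 (B.coord i ∘ₗ π₄ ∘ₗ f ∘ₗ V₂.subtype) (π₂ y)
    have e2 : B.repr (-(t / 2) • π₄ y + f₄ (π₄ y)) i =
        n i 0 * B.repr (π₄ y) 0 + n i 1 * B.repr (π₄ y) 1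
      + n i 2 * B.repr (π₄ y) 2 + n i 3 * B.repr (π₄ y) 3 := by
      let N : V₄ →ₗ[ℝ] V₄ := (-(t / 2)) • LinearMap.id + f₄
      have hNN : ∀ x, N x = -(t / 2) • x + f₄ x := fun x => rfl
      simp only [n, ← hNN]
      generalize N = N
      have h := congrArg (fun z => B.repr (N z) i) (B.sum_repr (π₄ y))
      rw [← h]
      simp only [Fin.sum_univ_four, map_add, map_smul, Finsupp.add_apply, Finsupp.smul_apply,
        smul_eq_mul]
      ring
    rw [map_add, Finsupp.add_apply, e1, e2]
    ring
  -- symplectic relations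
  have rel : ∀ i j, (∑ a, n a i * ω (B a) (B j)) + (∑ a, n a j * ω (B i) (B a)) = -t * ω (B i) (B j) := by
    intro i j
    have e1 : ∀ j, ∑ a, n a j • B a = -(t / 2) • B j + f₄ (B j) := fun j => B.sum_repr _
    have s1 : (∑ a, n a i * ω (B a) (B j)) = ω (-(t / 2) • B i + f₄ (B i)) (B j) := by
      rw [← e1]; simp
    have s2 : (∑ a, n a j * ω (B i) (B a)) = ω (B i) (-(t / 2) • B j + f₄ (B j)) := by
      rw [← e1]; simp
    rw [s1, s2]
    have := hf₄ (B i) (B j)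
    simp only [map_add, map_smul, LinearMap.add_apply, LinearMap.smul_apply, smul_eq_mul]
    linarith
  have sk := add_skew ω halt
  have b10 := sk (B 1) (B 0)
  have b32 := sk (B 3) (B 2)
  have b20 := sk (B 2) (B 0)
  have b30 := sk (B 3) (B 0)
  have b21 := sk (B 2) (B 1)
  have b31 := sk (B 3) (B 1)
  rw [b01] at b10
  rw [b23] at b32
  rw [b02] at b20
  rw [b03] at b30
  rw [b12] at b21
  rw [b13] at b31
  have r01 := rel 0 1
  have r23 := rel 2 3
  have r02 := rel 0 2
  have r03 := rel 0 3
  have r12 := rel 1 2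
  have r13 := rel 1 3
  simp only [Fin.sum_univ_four, b01, b23, b02, b03, b12, b13, b10, b32, b20, b30, b21, b31, halt]
    at r01 r23 r02 r03 r12 r13
  let δ : (Fin 6 → ℝ) → Fin 6 → ℝ := fun x =>
    ![n 0 0 * x 0 + n 0 1 * x 1 + n 0 2 * x 2 + n 0 3 * x 3 + k 0 * x 4 + l 0 * x 5,
      n 1 0 * x 0 + n 1 1 * x 1 + n 1 2 * x 2 + n 1 3 * x 3 + k 1 * x 4 + l 1 * x 5,
      n 2 0 * x 0 + n 2 1 * x 1 + n 2 2 * x 2 + n 2 3 * x 3 + k 2 * x 4 + l 2 * x 5,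
      n 3 0 * x 0 + n 3 1 * x 1 + n 3 2 * x 2 + n 3 3 * x 3 + k 3 * x 4 + l 3 * x 5,
      m 0 0 * x 4 + m 0 1 * x 5, m 1 0 * x 4 + m 1 1 * x 5]
  refine back_coord hg α D hbr hαD E ?_ δ ?_ ?_
  · intro x hx hE
    have hx0 : ((q x : ↥u) : g) = x := by rw [hq, hx]; simp
    rw [hEx] at hE
    have a0 := congrFun hE 0
    have a1 := congrFun hE 1
    have a2 := congrFun hE 2
    have a3 := congrFun hE 3
    have a4 := congrFun hE 4
    have a5 := congrFun hE 5
    simp only [Matrix.cons_val, Pi.zero_apply] at a0 a1 a2 a3 a4 a5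
    have z4 : π₄ (T (q x)) = 0 := by
      apply B.repr.injective
      ext i
      fin_cases i <;> simpa
    have z2 : π₂ (T (q x)) = 0 := by
      apply C.repr.injective
      ext i
      fin_cases i <;> simpa
    have hT0 := hdec (T (q x))
    rw [z4, z2] at hT0
    have : q x = 0 := by
      apply T.injective
      rw [hT0]; simp
    rw [← hx0, this]; rfl
  · intro x
    rw [hEx, hEx, hqD, hTf]
    simp only [c2, c4, δ, Matrix.cons_val]
  · refine Om_inv (m 0 0) (m 0 1) (m 1 0) (m 1 1) n k l δ ?_ ?_ ?_ ?_ ?_ ?_ <;> intro x <;>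
      simp only [δ, Matrix.cons_val]
    · linear_combination (-x 2) * r12 + (-x 3) * r13
    · linear_combination (x 1) * r01 + x 2 * r02 + x 3 * r03 - x 1 * htm
    · linear_combination (x 3) * r23 - x 3 * htm

/-- Let `g` be a seven-dimensional real Lie algebra with a
six-dimensional abelian ideal `u`, `e₇ ∈ g ∖ u`, `u = V₂ ⊕ V₄` with `dim V₂ = 2`,
`dim V₄ = 4`, and let `ω ∈ Λ²V₄*` be nondegenerate.  Then `g` admits a cocalibrated
`G₂*`-structure (a closed four-form of the standard type `stdG2star`) iff `ad(e₇)|_u` is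
similar under `GL(u)` to an element of the set
`S = {f : f(V₄) ⊆ V₄, pr_{V₄} ∘ f|_{V₄} = -(tr f₂ / 2)·id + f₄, f₄ ∈ sp(V₄,ω)}`,
where `f₂ := pr_{V₂} ∘ f|_{V₂}`. -/
theorem stmt17 {g : Type*} [LieRing g] [LieAlgebra ℝ g] [FiniteDimensional ℝ g]
    (hg : finrank ℝ g = 7)
    (u : LieIdeal ℝ g) (habel : ∀ x ∈ u, ∀ y ∈ u, ⁅x, y⁆ = (0 : g))
    (hu : finrank ℝ ↥u = 6) (e₇ : g) (he : e₇ ∉ u)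
    (V₂ V₄ : Submodule ℝ ↥u) (hc : IsCompl V₂ V₄)
    (h2 : finrank ℝ ↥V₂ = 2) (h4 : finrank ℝ ↥V₄ = 4)
    (ω : ↥V₄ →ₗ[ℝ] ↥V₄ →ₗ[ℝ] ℝ) (halt : ∀ v : ↥V₄, ω v v = 0)
    (hnd : ∀ v : ↥V₄, (∀ w : ↥V₄, ω v w = 0) → v = 0)
    (adE : ↥u →ₗ[ℝ] ↥u) (hadE : ∀ x : ↥u, (adE x : g) = ⁅e₇, (x : g)⁆) :
    (∃ Ψ : g [⋀^Fin 4]→ₗ[ℝ] ℝ, ceDiff 3 ⇑Ψ = 0 ∧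
        ∃ b : Basis (Fin 7) ℝ (Module.Dual ℝ g), Ψ = stdG2star b) ↔
      ∃ T : ↥u ≃ₗ[ℝ] ↥u, ∃ f : ↥u →ₗ[ℝ] ↥u,
        f = T.toLinearMap ∘ₗ adE ∘ₗ T.symm.toLinearMap ∧
        (∀ x : ↥u, x ∈ V₄ → f x ∈ V₄) ∧
        ∃ f₄ : ↥V₄ →ₗ[ℝ] ↥V₄,
          (∀ x y : ↥V₄, ω (f₄ x) y + ω x (f₄ y) = 0) ∧
          ∀ x : ↥V₄,
            (V₄.linearProjOfIsCompl V₂ hc.symm) (f ↑x) =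
              -((LinearMap.trace ℝ ↥V₂)
                  ((V₂.linearProjOfIsCompl V₄ hc) ∘ₗ f ∘ₗ V₂.subtype) / 2) • x +
                f₄ x := by
  constructor
  · rintro ⟨Ψ, hΨ, b, rfl⟩
    obtain ⟨W, hW, hS⟩ := forward_symp hg u habel hu e₇ he adE hadE b hΨ
    obtain ⟨W', hW', hS'⟩ := symp_reduce hu adE W hW hS
    exact good_to_rhs hu V₂ V₄ hc h2 h4 ω halt hnd adE W' hW' hS'
  · rintro ⟨T, f, hf, hV, f₄, hf₄, hN⟩
    exact backward hg u habel hu e₇ he V₂ V₄ hc h2 h4 ω halt hnd adE hadE T f hf hV f₄ hf₄ hN
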